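/- arXiv:1508.05813 — 2 statements merged into one kernel-verified Lean document; each statement's English description precedes it below -/
import Mathlib

section
/- Let R be a commutative Noetherian ring and let C be a semidualizing R-module. Then C is pointwise dualizing if and only if the following holds: an R-module M is flat if and only if μ^i(p, C ⊗_R M) = 0 for all prime ideals p of R and all i ≠ ht(p). -/
/-!
Write `X = C ⊗ M`, and say that `X` satisfies the Bass condition (`BassCond`) when
`μ^i(p, X) = 0` for all primes `p` and all `i ≠ ht p`. By flat base change
(`extVan_residue_iff`) this is the vanishing of `Ext^i_R(R/p, R_p ⊗ X)` for `i ≠ ht p`.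

*The module `C` itself.* `C` is pointwise dualizing exactly when it satisfies the Bass condition.
If `C` is pointwise dualizing, then `C_p` is a semidualizing module of finite injective dimension
over `R_p`, and its only nonvanishing Bass number at the maximal ideal sits in degree `ht p`
(`local_vanishing`). The argument kills regular elements, which lowers the height and the degree of
`Ext` by one (Rees), until the depth is zero; there a module with eventually vanishing
Bass numbers has none in positive degree, and the dimension must be zero. Conversely, the vanishing of
`Ext^i(k(m), C_m)` for `i > ht m` bounds the injective dimension of `C_m`
(`pointwise_of_bassCond`). Taking `M = R` gives one implication of the theorem.

*Flat modules.* If `M` is flat, `Ext(Z, Y ⊗ M)` vanishes whenever `Ext(Z, Y)` does, for finitely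
generated `Z` (`ExtVan.flat_tensor`), so `C ⊗ M` inherits the Bass condition from `C`.

*The converse.* Suppose `C` and `X = C ⊗ M` satisfy the Bass condition (`flat_of_bassCond`). Over a
local ring of dimension zero the condition says that `C` and `X` are `Ext¹`-acyclic against finitely
generated modules. Hence the Hom-evaluation maps `Z ⊗ Hom(C, X) → Hom(Hom(Z, C), X)` are
bijective (`ev_bijective`), so `Hom(C, X)` is flat and `C ⊗ Hom(C, X) ≅ X`; since `C` is finitely
generated and faithful it follows that `M ≅ Hom(C, X)` (`flat_of_extVan_one`). In general, the
Bass condition forces associated primes of `X` to have height zero, so regular elements of `R` are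
regular on `X`, and on `M` after replacing `M` by its image in `Hom(C, X)`. For a regular element
`s` the hypotheses pass to `R/s`, so `M/sM` is flat over `R/s` by Noetherian induction. At an
associated prime of `R` the height is zero, so `M` is flat there by the case of dimension zero.
These two facts give flatness (`flat_of_quot`): the kernel of `I ⊗ M → M` is killed by a regular
element, by prime avoidance, while regular elements act injectively on `I ⊗ M`.
-/

open CategoryTheory

universe u

noncomputable section

variable (R : Type u) [CommRing R]

/-- The Ext module `Ext^i_R(M, N)`, via the derived functor definition. -/
noncomputable def extM (M N : Type u) [AddCommGroup M] [Module R M]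
    [AddCommGroup N] [Module R N] (i : ℕ) : ModuleCat R :=
  ((Ext R (ModuleCat.{u} R) i).obj (Opposite.op (ModuleCat.of R M))).obj (ModuleCat.of R N)

/-- The Tor module `Tor_i^R(M, N)`, via the derived functor definition. -/
noncomputable def torM (M N : Type u) [AddCommGroup M] [Module R M]
    [AddCommGroup N] [Module R N] (i : ℕ) : ModuleCat R :=
  ((Tor (ModuleCat.{u} R) i).obj (ModuleCat.of R M)).obj (ModuleCat.of R N)

/-- `C` is a semidualizing `R`-module: it is finitely generated, the homothety map
`R → Hom_R(C,C)` is bijective, and `Ext^i_R(C,C) = 0` for all `i > 0`. -/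
def IsSemidualizing (C : Type u) [AddCommGroup C] [Module R C] : Prop :=
  Module.Finite R C ∧
  Function.Bijective (fun r : R => r • (LinearMap.id : C →ₗ[R] C)) ∧
  ∀ i : ℕ, 0 < i → Subsingleton (extM R C C i)

/-- Injective dimension of a module, characterized via vanishing of Ext. -/
noncomputable def injDim (M : Type u) [AddCommGroup M] [Module R M] : ℕ∞ :=
  sInf {n : ℕ∞ | ∀ (N : Type u) (_ : AddCommGroup N) (_ : Module R N) (i : ℕ),
    n < i → Subsingleton (extM R N M i)}

/-- Flat dimension of a module, characterized via vanishing of Tor. -/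
noncomputable def flatDim (M : Type u) [AddCommGroup M] [Module R M] : ℕ∞ :=
  sInf {n : ℕ∞ | ∀ (N : Type u) (_ : AddCommGroup N) (_ : Module R N) (i : ℕ),
    n < i → Subsingleton (torM R N M i)}

/-- The length of a module, as the height of `⊤` in its submodule lattice. -/
noncomputable def mLength (M : Type u) [AddCommGroup M] [Module R M] : ℕ∞ :=
  Order.height (⊤ : Submodule R M)

/-- Depth of a module over a local ring: the least `i` with `Ext^i(k, M) ≠ 0`. -/
noncomputable def depth [IsLocalRing R] (M : Type u) [AddCommGroup M] [Module R M] : ℕ∞ :=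
  sInf {n : ℕ∞ | ∃ i : ℕ, n = i ∧ Nontrivial (extM R (IsLocalRing.ResidueField R) M i)}

/-- Depth, as a natural number. -/
noncomputable def depthNat [IsLocalRing R] (M : Type u) [AddCommGroup M] [Module R M] : ℕ :=
  sInf {i : ℕ | Nontrivial (extM R (IsLocalRing.ResidueField R) M i)}

/-- The type of a module: `r_R(M) = dim_k Ext^t_R(k, M)` where `t = depth_R(M)`. -/
noncomputable def rtype [IsLocalRing R] (M : Type u) [AddCommGroup M] [Module R M] : ℕ∞ :=
  mLength R (extM R (IsLocalRing.ResidueField R) M (depthNat R M))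

/-- A dualizing module: a semidualizing module of finite injective dimension. -/
def IsDualizing (C : Type u) [AddCommGroup C] [Module R C] : Prop :=
  IsSemidualizing R C ∧ injDim R C < ⊤

/-- A pointwise dualizing module: the localization at every maximal ideal is dualizing. -/
def IsPointwiseDualizing (C : Type u) [AddCommGroup C] [Module R C] : Prop :=
  IsSemidualizing R C ∧ ∀ (p : Ideal R) [p.IsPrime], p.IsMaximal →
    IsDualizing (Localization.AtPrime p) (LocalizedModule p.primeCompl C)

/-- Height of a prime ideal. -/
noncomputable def primeHeight (p : Ideal R) [hp : p.IsPrime] : ℕ∞ :=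
  Order.height (⟨p, hp⟩ : PrimeSpectrum R)

/-- A totally `C`-reflexive module. -/
def IsTotallyCReflexive (C M : Type u) [AddCommGroup C] [Module R C]
    [AddCommGroup M] [Module R M] : Prop :=
  Module.Finite R M ∧
  Function.Bijective ((LinearMap.id : (M →ₗ[R] C) →ₗ[R] (M →ₗ[R] C)).flip) ∧
  ∀ i : ℕ, 0 < i →
    Subsingleton (extM R M C i) ∧ Subsingleton (extM R (M →ₗ[R] C) C i)

/-- `G_C`-dimension of `M` is at most `n`. -/
def gcDimLE (C : Type u) [AddCommGroup C] [Module R C] :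
    ℕ → (M : Type u) → [AddCommGroup M] → [Module R M] → Prop
  | 0, M, _, _ => IsTotallyCReflexive R C M
  | n+1, M, _, _ => ∃ (G K : Type u) (_ : AddCommGroup G) (_ : Module R G)
      (_ : AddCommGroup K) (_ : Module R K) (f : K →ₗ[R] G) (g : G →ₗ[R] M),
      IsTotallyCReflexive R C G ∧ Function.Injective f ∧ Function.Surjective g ∧
      LinearMap.range f = LinearMap.ker g ∧ gcDimLE C n K

/-- `M` has finite `G_C`-dimension. -/
def HasFiniteGCDim (C M : Type u) [AddCommGroup C] [Module R C]
    [AddCommGroup M] [Module R M] : Prop :=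
  ∃ n : ℕ, gcDimLE R C n M

/-- A finitely generated module over a local ring is Cohen-Macaulay if its depth
equals its Krull dimension. -/
def IsCohenMacaulayModule [IsLocalRing R] (M : Type u) [AddCommGroup M] [Module R M] : Prop :=
  Module.Finite R M ∧ (depth R M : WithBot ℕ∞) = Order.krullDim (Module.support R M)

/-- The `S`-module structure on `Hom_R(S, M)` through the domain, for an `R`-algebra `S`. -/
instance homDomModule (S : Type u) [CommRing S] [Algebra R S]
    (M : Type u) [AddCommGroup M] [Module R M] : Module S (S →ₗ[R] M) where
  smul s f := f.comp (LinearMap.mul R S s)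
  one_smul f := by ext x; show f (1 * x) = f x; rw [one_mul]
  mul_smul s t f := by ext x; show f (s * t * x) = f (t * (s * x)); ring_nf
  smul_zero s := by ext x; rfl
  smul_add s f g := by ext x; rfl
  add_smul s t f := by
    ext x; show f ((s + t) * x) = f (s * x) + f (t * x); rw [add_mul, map_add]
  zero_smul f := by ext x; show f (0 * x) = 0; rw [zero_mul, map_zero]

/-- The Bass number `μ^i(p, M) = dim_{k(p)} Ext^i_{R_p}(k(p), M_p)`. -/
noncomputable def bassNumber (p : Ideal R) [p.IsPrime] (i : ℕ)
    (M : Type u) [AddCommGroup M] [Module R M] : ℕ∞ :=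
  mLength (Localization.AtPrime p)
    (extM (Localization.AtPrime p) (IsLocalRing.ResidueField (Localization.AtPrime p))
      (LocalizedModule p.primeCompl M) i)

/-- The dual Bass number `π_i(p, M) = dim_{k(p)} Tor_i^{R_p}(k(p), Hom_R(R_p, M))`. -/
noncomputable def dualBassNumber (p : Ideal R) [p.IsPrime] (i : ℕ)
    (M : Type u) [AddCommGroup M] [Module R M] : ℕ∞ :=
  mLength (Localization.AtPrime p)
    (torM (Localization.AtPrime p) (IsLocalRing.ResidueField (Localization.AtPrime p))
      (Localization.AtPrime p →ₗ[R] M) i)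

/-- A cotorsion module: `Ext^1_R(F, M) = 0` for every flat module `F`. -/
def IsCotorsion (M : Type u) [AddCommGroup M] [Module R M] : Prop :=
  ∀ (F : Type u) (_ : AddCommGroup F) (_ : Module R F), Module.Flat R F →
    Subsingleton (extM R F M 1)

/-- A `C`-flat module: one isomorphic to `C ⊗_R F` with `F` flat. -/
def IsCFlat (C M : Type u) [AddCommGroup C] [Module R C] [AddCommGroup M] [Module R M] : Prop :=
  ∃ (F : Type u) (_ : AddCommGroup F) (_ : Module R F), Module.Flat R F ∧
    Nonempty (M ≃ₗ[R] TensorProduct R C F)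

/-- A `C`-injective module: one isomorphic to `Hom_R(C, I)` with `I` injective. -/
def IsCInjective (C M : Type u) [AddCommGroup C] [Module R C]
    [AddCommGroup M] [Module R M] : Prop :=
  ∃ (I : Type u) (_ : AddCommGroup I) (_ : Module R I), Module.Injective R I ∧
    Nonempty (M ≃ₗ[R] (C →ₗ[R] I))

/-- `φ : F → M` is a flat cover of `M`. -/
def IsFlatCover (M F : Type u) [AddCommGroup M] [Module R M] [AddCommGroup F] [Module R F]
    (φ : F →ₗ[R] M) : Prop :=
  Module.Flat R F ∧
  (∀ (G : Type u) (_ : AddCommGroup G) (_ : Module R G), Module.Flat R G →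
    ∀ ψ : G →ₗ[R] M, ∃ h : G →ₗ[R] F, φ.comp h = ψ) ∧
  (∀ ψ : F →ₗ[R] F, φ.comp ψ = φ → Function.Bijective ψ)

/-- `E` is an injective hull of `N`: `E` is injective and contains `N` as an
essential submodule. -/
def IsInjectiveHull (N E : Type u) [AddCommGroup N] [Module R N]
    [AddCommGroup E] [Module R E] : Prop :=
  Module.Injective R E ∧ ∃ ι : N →ₗ[R] E, Function.Injective ι ∧
    ∀ K : Submodule R E, K ≠ ⊥ → K ⊓ LinearMap.range ι ≠ ⊥

end

namespace PDual
open CategoryTheory Abelian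
open scoped TensorProduct

/-! ### Vanishing of Ext -/

section
variable (R : Type u) [CommRing R]
variable (M N : Type u) [AddCommGroup M] [Module R M] [AddCommGroup N] [Module R N]

/-- `ExtVan R M N i` means `Ext^i_R(M, N) = 0`, for the derived-category `Ext` of Mathlib. -/
def ExtVan (i : ℕ) : Prop := Subsingleton (Abelian.Ext (ModuleCat.of R M) (ModuleCat.of R N) i)

lemma subsingleton_extM_iff (i : ℕ) : Subsingleton (extM R M N i) ↔ ExtVan R M N i := by
  let P := projectiveResolution (ModuleCat.of R M)
  have h1 : Subsingleton (extM R M N i) ↔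
      (P.complex.linearYonedaObj R (ModuleCat.of R N)).ExactAt i := by
    rw [← ModuleCat.isZero_iff_subsingleton, HomologicalComplex.exactAt_iff_isZero_homology]
    exact (P.isoExt i (ModuleCat.of R N)).isZero_iff
  rw [h1, ExtVan]
  cases i with
  | zero =>
    rw [HomologicalComplex.exactAt_iff' _ 0 0 1 (by simp) (by simp),
      ShortComplex.moduleCat_exact_iff]
    rw [(Abelian.Ext.homEquiv₀ (X := ModuleCat.of R M) (Y := ModuleCat.of R N)).subsingleton_congr]
    let π : P.complex.X 0 ⟶ ModuleCat.of R M := P.π.f 0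
    have hπ : P.complex.d 1 0 ≫ π = 0 := P.complex_d_comp_π_f_zero
    have hex : (ShortComplex.mk _ _ hπ).Exact := P.exact₀
    have hepi : Epi π := inferInstanceAs (Epi (P.π.f 0))
    constructor
    · intro h
      refine subsingleton_of_forall_eq 0 fun f => ?_
      obtain ⟨y, hy⟩ := h (π ≫ f) (by
        change P.complex.d 1 0 ≫ π ≫ f = 0
        rw [← Category.assoc, hπ, Limits.zero_comp])
      have hy' : π ≫ f = 0 := by
        rw [← hy]
        have : (P.complex.linearYonedaObj R (ModuleCat.of R N)).d 0 0 = 0 := by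
          apply HomologicalComplex.shape; simp
        change ((P.complex.linearYonedaObj R (ModuleCat.of R N)).d 0 0) y = _
        rw [this]; rfl
      rw [← cancel_epi π, hy', Limits.comp_zero]
    · intro h x hx
      have : Epi (ShortComplex.mk _ _ hπ).g := hepi
      have hx' : P.complex.d 1 0 ≫ (show P.complex.X 0 ⟶ ModuleCat.of R N from x) = 0 := hx
      refine ⟨0, ?_⟩
      rw [map_zero]
      have h2 := hex.g_desc _ hx'
      rw [Subsingleton.elim (hex.desc _ hx') (0 : ModuleCat.of R M ⟶ ModuleCat.of R N),
        Limits.comp_zero] at h2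
      exact h2
  | succ n =>
    rw [HomologicalComplex.exactAt_iff' _ n (n+1) (n+2) (by simp) (by simp),
      ShortComplex.moduleCat_exact_iff]
    constructor
    · intro h
      refine subsingleton_of_forall_eq 0 fun α => ?_
      obtain ⟨f, hf, rfl⟩ := P.extMk_surjective α (n+2) rfl
      rw [P.extMk_eq_zero_iff _ _ _ _ n rfl]
      exact h f hf
    · intro h x hx
      exact (P.extMk_eq_zero_iff (Y := ModuleCat.of R N) x (n+2) rfl hx n rfl).1
        (Subsingleton.elim _ _)

end

/-! ### Long exact sequences and dimension shifting -/

section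
variable {R : Type u} [CommRing R]
variable {K P Z N : Type u} [AddCommGroup K] [Module R K] [AddCommGroup P] [Module R P]
  [AddCommGroup Z] [Module R Z] [AddCommGroup N] [Module R N]

lemma shortExact {f : K →ₗ[R] P} {g : P →ₗ[R] Z} (hf : Function.Injective f)
    (hg : Function.Surjective g) (h : Function.Exact f g) :
    (ShortComplex.mk (ModuleCat.ofHom f) (ModuleCat.ofHom g)
      (by ext x; exact h.apply_apply_eq_zero x)).ShortExact where
  exact := by
    rw [ShortComplex.moduleCat_exact_iff]
    intro x hx
    exact (h x).1 hx
  mono_f := (ModuleCat.mono_iff_injective _).2 hf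
  epi_g := (ModuleCat.epi_iff_surjective _).2 hg

section LES
variable {f : K →ₗ[R] P} {g : P →ₗ[R] Z} (hf : Function.Injective f)
    (hg : Function.Surjective g) (h : Function.Exact f g)
include hf hg h

lemma ExtVan.cov₂ {i : ℕ} (h1 : ExtVan R N K i) (h3 : ExtVan R N Z i) : ExtVan R N P i := by
  have h1' : Subsingleton (Ext (ModuleCat.of R N) (ModuleCat.of R K) i) := h1
  have h3' : Subsingleton (Ext (ModuleCat.of R N) (ModuleCat.of R Z) i) := h3
  refine subsingleton_of_forall_eq 0 fun x => ?_
  obtain ⟨y, rfl⟩ := Ext.covariant_sequence_exact₂ _ (shortExact hf hg h) x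
    (Subsingleton.elim (α := Ext (ModuleCat.of R N) (ModuleCat.of R Z) i) _ _)
  rw [Subsingleton.elim (α := Ext (ModuleCat.of R N) (ModuleCat.of R K) i) y 0, Ext.zero_comp]

lemma ExtVan.cov₃ {i : ℕ} (h2 : ExtVan R N P i) (h1 : ExtVan R N K (i + 1)) :
    ExtVan R N Z i := by
  have h1' : Subsingleton (Ext (ModuleCat.of R N) (ModuleCat.of R K) (i + 1)) := h1
  have h3' : Subsingleton (Ext (ModuleCat.of R N) (ModuleCat.of R P) i) := h2
  refine subsingleton_of_forall_eq 0 fun x => ?_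
  obtain ⟨y, rfl⟩ := Ext.covariant_sequence_exact₃ _ (shortExact hf hg h) x rfl
    (Subsingleton.elim (α := Ext (ModuleCat.of R N) (ModuleCat.of R K) (i + 1)) _ _)
  rw [Subsingleton.elim (α := Ext (ModuleCat.of R N) (ModuleCat.of R P) i) y 0, Ext.zero_comp]

lemma ExtVan.cov₁ {i : ℕ} (h3 : ExtVan R N Z i) (h2 : ExtVan R N P (i + 1)) :
    ExtVan R N K (i + 1) := by
  have h1' : Subsingleton (Ext (ModuleCat.of R N) (ModuleCat.of R P) (i + 1)) := h2
  have h3' : Subsingleton (Ext (ModuleCat.of R N) (ModuleCat.of R Z) i) := h3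
  refine subsingleton_of_forall_eq 0 fun x => ?_
  obtain ⟨y, rfl⟩ := Ext.covariant_sequence_exact₁ _ (shortExact hf hg h) x
    (Subsingleton.elim (α := Ext (ModuleCat.of R N) (ModuleCat.of R P) (i + 1)) _ _) rfl
  rw [Subsingleton.elim (α := Ext (ModuleCat.of R N) (ModuleCat.of R Z) i) y 0, Ext.zero_comp]

lemma ExtVan.contra₂ {i : ℕ} (h1 : ExtVan R K N i) (h3 : ExtVan R Z N i) : ExtVan R P N i := by
  have h1' : Subsingleton (Ext (ModuleCat.of R K) (ModuleCat.of R N) i) := h1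
  have h3' : Subsingleton (Ext (ModuleCat.of R Z) (ModuleCat.of R N) i) := h3
  refine subsingleton_of_forall_eq 0 fun x => ?_
  obtain ⟨y, rfl⟩ := Ext.contravariant_sequence_exact₂ (shortExact hf hg h) _ x
    (Subsingleton.elim (α := Ext (ModuleCat.of R K) (ModuleCat.of R N) i) _ _)
  rw [Subsingleton.elim (α := Ext (ModuleCat.of R Z) (ModuleCat.of R N) i) y 0, Ext.comp_zero]

lemma ExtVan.contra₁ {i : ℕ} (h2 : ExtVan R P N i) (h3 : ExtVan R Z N (i + 1)) :
    ExtVan R K N i := by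
  have h1' : Subsingleton (Ext (ModuleCat.of R P) (ModuleCat.of R N) i) := h2
  have h3' : Subsingleton (Ext (ModuleCat.of R Z) (ModuleCat.of R N) (i + 1)) := h3
  refine subsingleton_of_forall_eq 0 fun x => ?_
  obtain ⟨y, rfl⟩ := Ext.contravariant_sequence_exact₁ (shortExact hf hg h) _ x (add_comm 1 i)
    (Subsingleton.elim (α := Ext (ModuleCat.of R Z) (ModuleCat.of R N) (i + 1)) _ _)
  rw [Subsingleton.elim (α := Ext (ModuleCat.of R P) (ModuleCat.of R N) i) y 0, Ext.comp_zero]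

lemma ExtVan.contra₃ {i : ℕ} (h1 : ExtVan R K N i) (h2 : ExtVan R P N (i + 1)) :
    ExtVan R Z N (i + 1) := by
  have h1' : Subsingleton (Ext (ModuleCat.of R K) (ModuleCat.of R N) i) := h1
  have h3' : Subsingleton (Ext (ModuleCat.of R P) (ModuleCat.of R N) (i + 1)) := h2
  refine subsingleton_of_forall_eq 0 fun x => ?_
  obtain ⟨y, rfl⟩ := Ext.contravariant_sequence_exact₃ (shortExact hf hg h) _ x
    (Subsingleton.elim (α := Ext (ModuleCat.of R P) (ModuleCat.of R N) (i + 1)) _ _)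
    (add_comm 1 i)
  rw [Subsingleton.elim (α := Ext (ModuleCat.of R K) (ModuleCat.of R N) i) y 0, Ext.comp_zero]

end LES

lemma extVan_zero : ExtVan R Z N 0 ↔ ∀ f : Z →ₗ[R] N, f = 0 := by
  rw [ExtVan, (Ext.homEquiv₀ (X := ModuleCat.of R Z) (Y := ModuleCat.of R N)).subsingleton_congr]
  constructor
  · intro h f
    have := congrArg ModuleCat.Hom.hom (Subsingleton.elim (ModuleCat.ofHom f) 0)
    simpa using this
  · intro h
    refine subsingleton_of_forall_eq 0 fun f => ?_
    ext1
    exact h f.hom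

lemma extVan_proj (Z N : Type u) [AddCommGroup Z] [Module R Z] [AddCommGroup N] [Module R N]
    [Module.Projective R Z] (i : ℕ) : ExtVan R Z N (i + 1) := by
  have : Projective (ModuleCat.of R Z) := (IsProjective.iff_projective Z).1 inferInstance
  exact subsingleton_of_forall_eq 0 fun f => Ext.eq_zero_of_projective f

lemma ExtVan.of_equiv {Z' N' : Type u} [AddCommGroup Z'] [Module R Z'] [AddCommGroup N']
    [Module R N'] (e : Z ≃ₗ[R] Z') (e' : N ≃ₗ[R] N') {i : ℕ} (h : ExtVan R Z N i) :
    ExtVan R Z' N' i := by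
  have h' : Subsingleton (Ext (ModuleCat.of R Z) (ModuleCat.of R N) i) := h
  refine subsingleton_of_forall_eq 0 fun x => ?_
  have h1 : x = (Ext.mk₀ e.symm.toModuleIso.hom).comp (((Ext.mk₀ e.toModuleIso.hom).comp x
    (zero_add i)).comp ((Ext.mk₀ e'.symm.toModuleIso.hom).comp (Ext.mk₀ e'.toModuleIso.hom)
      (add_zero 0)) (add_zero i)) (zero_add i) := by
    rw [Ext.mk₀_comp_mk₀]
    have h1 : e'.symm.toModuleIso.hom ≫ e'.toModuleIso.hom = 𝟙 _ := by
      ext; simp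
    have h2 : e.symm.toModuleIso.hom ≫ e.toModuleIso.hom = 𝟙 _ := by
      ext; simp
    rw [h1, Ext.comp_mk₀_id, Ext.mk₀_comp_mk₀_assoc, h2, Ext.mk₀_id_comp]
  rw [h1, ← Ext.comp_assoc_of_second_deg_zero (β := Ext.mk₀ e'.symm.toModuleIso.hom)]
  rw [Subsingleton.elim (α := Ext (ModuleCat.of R Z) (ModuleCat.of R N) i)
    (((Ext.mk₀ e.toModuleIso.hom).comp x (zero_add i)).comp
      (Ext.mk₀ e'.symm.toModuleIso.hom) (add_zero i)) 0]
  simp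

/-- For `P` projective and `0 → K → P → Z → 0` exact, `Ext¹(Z, N)` is the cokernel of
`Hom(P, N) → Hom(K, N)`. -/
lemma extVan_one [Module.Projective R P] {f : K →ₗ[R] P} {g : P →ₗ[R] Z}
    (hf : Function.Injective f) (hg : Function.Surjective g) (h : Function.Exact f g) :
    ExtVan R Z N 1 ↔ ∀ φ : K →ₗ[R] N, ∃ ψ : P →ₗ[R] N, ψ ∘ₗ f = φ := by
  constructor
  · intro hZ φ
    have hZ' : Subsingleton (Ext (ModuleCat.of R Z) (ModuleCat.of R N) 1) := hZ
    obtain ⟨y, hy⟩ := Ext.contravariant_sequence_exact₁ (shortExact hf hg h) (ModuleCat.of R N)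
      (Ext.mk₀ (ModuleCat.ofHom φ)) rfl (Subsingleton.elim
        (α := Ext (ModuleCat.of R Z) (ModuleCat.of R N) 1) _ _)
    obtain ⟨ψ, rfl⟩ := Ext.homEquiv₀.symm.surjective y
    refine ⟨ψ.hom, ?_⟩
    rw [Ext.homEquiv₀_symm_apply, Ext.mk₀_comp_mk₀] at hy
    have := Ext.homEquiv₀.symm.injective hy
    exact congrArg ModuleCat.Hom.hom this
  · intro H
    have h3' : Subsingleton (Ext (ModuleCat.of R P) (ModuleCat.of R N) 1) := extVan_proj _ _ 0
    refine subsingleton_of_forall_eq 0 fun x => ?_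
    obtain ⟨y, rfl⟩ := Ext.contravariant_sequence_exact₃ (shortExact hf hg h) _ x
      (Subsingleton.elim (α := Ext (ModuleCat.of R P) (ModuleCat.of R N) 1) _ _)
      (n₀ := 0) rfl
    obtain ⟨φ, rfl⟩ := Ext.homEquiv₀.symm.surjective y
    obtain ⟨ψ, hψ⟩ := H φ.hom
    have : φ = ModuleCat.ofHom f ≫ ModuleCat.ofHom ψ := by ext1; exact hψ.symm
    rw [Ext.homEquiv₀_symm_apply, this, ← Ext.mk₀_comp_mk₀]
    exact (shortExact hf hg h).extClass_comp_assoc _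

/-- Dimension shifting along a presentation of `Z` with projective middle term. -/
lemma extVan_shift [Module.Projective R P] {f : K →ₗ[R] P} {g : P →ₗ[R] Z}
    (hf : Function.Injective f) (hg : Function.Surjective g) (h : Function.Exact f g) (i : ℕ) :
    ExtVan R Z N (i + 2) ↔ ExtVan R K N (i + 1) :=
  ⟨fun h3 => ExtVan.contra₁ hf hg h (extVan_proj _ _ _) h3,
   fun h1 => ExtVan.contra₃ hf hg h h1 (extVan_proj _ _ _)⟩

/-- Every module is a quotient of a free module, with kernel `K`. -/
lemma exists_free_cover (R : Type u) [CommRing R] (Z : Type u) [AddCommGroup Z] [Module R Z] :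
    ∃ (P : Type u) (_ : AddCommGroup P) (_ : Module R P) (_ : Module.Free R P) (K : Submodule R P)
      (g : P →ₗ[R] Z), Function.Surjective g ∧ Function.Exact K.subtype g :=
  ⟨Z →₀ R, inferInstance, inferInstance, inferInstance, LinearMap.ker (Finsupp.linearCombination R id),
    Finsupp.linearCombination R id, Finsupp.linearCombination_id_surjective R Z,
    LinearMap.exact_subtype_ker_map _⟩

lemma exists_finite_cover (R : Type u) [CommRing R] (Z : Type u) [AddCommGroup Z]
    [Module R Z] [Module.Finite R Z] :
    ∃ (n : ℕ) (K : Submodule R (Fin n → R)) (g : (Fin n → R) →ₗ[R] Z),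
      Function.Surjective g ∧ Function.Exact K.subtype g := by
  obtain ⟨n, g, hg⟩ := Module.Finite.exists_fin' R Z
  exact ⟨n, LinearMap.ker g, g, hg, LinearMap.exact_subtype_ker_map _⟩

end

/-! ### Reduction to residue rings of primes -/

section
variable {R : Type u} [CommRing R]
variable {K P Z N : Type u} [AddCommGroup K] [Module R K] [AddCommGroup P] [Module R P]
  [AddCommGroup Z] [Module R Z] [AddCommGroup N] [Module R N]

lemma extVan_subsingleton_left [Subsingleton Z] (i : ℕ) : ExtVan R Z N i := by
  cases i with
  | zero => exact extVan_zero.2 fun f => Subsingleton.elim _ _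
  | succ i => exact extVan_proj _ _ _

/-- Dévissage: vanishing of `Ext^i(-, N)` on all `R ⧸ p` gives vanishing on all finite modules. -/
lemma extVan_of_primes [IsNoetherianRing R] {i : ℕ}
    (h : ∀ p : Ideal R, p.IsPrime → ExtVan R (R ⧸ p) N i)
    (Z : Type u) [AddCommGroup Z] [Module R Z] [hZ : Module.Finite R Z] : ExtVan R Z N i := by
  induction hZ using IsNoetherianRing.induction_on_isQuotientEquivQuotientPrime R with
  | subsingleton Z => exact extVan_subsingleton_left _
  | quotient Z p e => exact ExtVan.of_equiv e.symm (LinearEquiv.refl R N) (h p.1 p.2)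
  | exact Z₁ Z₂ Z₃ f g hf hg hfg h₁ h₃ => exact ExtVan.contra₂ hf hg hfg h₁ h₃

/-- If `x` in the Jacobson radical is regular on `Z` with cokernel `W`, then by Nakayama
`Ext^{i+1}(W, N) = 0` forces `Ext^i(Z, N) = 0`. -/
lemma extVan_of_smul [IsNoetherianRing R] [Module.Finite R Z] [Module.Finite R N]
    {W : Type u} [AddCommGroup W] [Module R W] {x : R} (hx : x ∈ Ideal.jacobson (⊥ : Ideal R))
    {f : Z →ₗ[R] Z} {g : Z →ₗ[R] W} (hfx : f = x • LinearMap.id)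
    (hf : Function.Injective f) (hg : Function.Surjective g) (h : Function.Exact f g) {i : ℕ}
    (hW : ExtVan R W N (i + 1)) : ExtVan R Z N i := by
  have hW' : Subsingleton (Ext (ModuleCat.of R W) (ModuleCat.of R N) (i + 1)) := hW
  have hfg : Module.Finite R (Ext (ModuleCat.of R Z) (ModuleCat.of R N) i) := inferInstance
  have key : (⊤ : Submodule R (Ext (ModuleCat.of R Z) (ModuleCat.of R N) i)) ≤
      Ideal.span {x} • ⊤ := by
    intro y _
    obtain ⟨z, rfl⟩ := Ext.contravariant_sequence_exact₁ (shortExact hf hg h) _ y (add_comm 1 i)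
      (Subsingleton.elim (α := Ext (ModuleCat.of R W) (ModuleCat.of R N) (i + 1)) _ _)
    have : (ModuleCat.ofHom f) = x • 𝟙 (ModuleCat.of R Z) := by
      subst hfx; rfl
    dsimp only at z ⊢
    rw [this, Ext.mk₀_smul, Ext.smul_comp, Ext.mk₀_id_comp]
    exact Submodule.smul_mem_smul (Ideal.mem_span_singleton_self x) trivial
  have := Submodule.eq_bot_of_le_smul_of_le_jacobson_bot _ _ hfg.fg_top key
    (by rwa [Ideal.span_singleton_le_iff_mem])
  exact (Submodule.subsingleton_iff R).1 (subsingleton_of_bot_eq_top this.symm)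

/-- Multiplication by `a` gives `0 → R/(I : a) → R/I → R/(I + (a)) → 0`. -/
lemma quotient_exact (I J : Ideal R) (a : R) (hJ : ∀ r, r ∈ J ↔ r * a ∈ I) :
    ∃ (f : (R ⧸ J) →ₗ[R] (R ⧸ I)) (g : (R ⧸ I) →ₗ[R] (R ⧸ (I ⊔ Ideal.span {a}))),
      (∀ r : R, f (Submodule.Quotient.mk r) = Submodule.Quotient.mk (r * a)) ∧
      Function.Injective f ∧ Function.Surjective g ∧ Function.Exact f g := by
  refine ⟨Submodule.mapQ J I (LinearMap.mulRight R a) (fun r hr => (hJ r).1 hr),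
    Submodule.factor le_sup_left, fun r => rfl, ?_, Submodule.factor_surjective _, ?_⟩
  · rw [← LinearMap.ker_eq_bot, LinearMap.ker_eq_bot']
    intro m hm
    obtain ⟨r, rfl⟩ := Submodule.Quotient.mk_surjective _ m
    have hm : (Submodule.Quotient.mk (r * a) : R ⧸ I) = 0 := hm
    rw [Submodule.Quotient.mk_eq_zero] at hm
    rw [Submodule.Quotient.mk_eq_zero]
    exact (hJ r).2 hm
  · intro y
    obtain ⟨r, rfl⟩ := Submodule.Quotient.mk_surjective _ y
    change (Submodule.Quotient.mk r : R ⧸ (I ⊔ Ideal.span {a})) = 0 ↔ _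
    rw [Submodule.Quotient.mk_eq_zero]
    constructor
    · intro h
      obtain ⟨i, hi, b, hb, rfl⟩ := Submodule.mem_sup.1 h
      obtain ⟨c, rfl⟩ := Ideal.mem_span_singleton'.1 hb
      refine ⟨Submodule.Quotient.mk c, ?_⟩
      refine (Submodule.Quotient.eq I).2 ?_
      simpa using hi
    · rintro ⟨c, hc⟩
      obtain ⟨c, rfl⟩ := Submodule.Quotient.mk_surjective _ c
      have := (Submodule.Quotient.eq I).1 hc.symm
      rw [show r = (r - c * a) + c * a by ring]
      exact add_mem (le_sup_left (a := I) this)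
        (le_sup_right (a := I) (Ideal.mul_mem_left _ _ (Ideal.mem_span_singleton_self a)))

/-- Bass' lemma: over a local ring, eventual vanishing of `Ext^i(k, C)` gives eventual vanishing
of `Ext^i(Z, C)`, with the same bound, for all finite `Z`. -/
lemma extVan_of_residue [IsNoetherianRing R] [IsLocalRing R] [Module.Finite R N] {n : ℕ}
    (h : ∀ i, n < i → ExtVan R (R ⧸ IsLocalRing.maximalIdeal R) N i)
    (Z : Type u) [AddCommGroup Z] [Module R Z] [Module.Finite R Z] (i : ℕ) (hi : n < i) :
    ExtVan R Z N i := by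
  suffices H : ∀ I : Ideal R, ∀ i, n < i → ExtVan R (R ⧸ I) N i from
    extVan_of_primes (fun p _ => H p i hi) Z
  intro I
  induction I using WellFoundedGT.induction with
  | ind I ih =>
  intro i hi
  by_cases htop : I = ⊤
  · subst htop
    have : Subsingleton (R ⧸ (⊤ : Ideal R)) := Ideal.Quotient.subsingleton_iff.2 rfl
    exact extVan_subsingleton_left _
  by_cases hp : I.IsPrime
  · by_cases hm : I = IsLocalRing.maximalIdeal R
    · rw [hm]; exact h i hi
    have hlt : I < IsLocalRing.maximalIdeal R :=
      lt_of_le_of_ne (IsLocalRing.le_maximalIdeal htop) hm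
    obtain ⟨x, hxm, hxI⟩ := SetLike.exists_of_lt hlt
    obtain ⟨f, g, hfr, hf, hg, hfg⟩ := quotient_exact I I x
      (fun r => ⟨fun hr => I.mul_mem_right _ hr, fun hr => (hp.mem_or_mem hr).resolve_right hxI⟩)
    refine extVan_of_smul (x := x) ?_ ?_ hf hg hfg (ih _ ?_ _ (by omega))
    · rw [IsLocalRing.jacobson_eq_maximalIdeal _ bot_ne_top]; exact hxm
    · ext
      rw [LinearMap.comp_apply, LinearMap.comp_apply]
      change f (Submodule.Quotient.mk 1) = x • Submodule.Quotient.mk 1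
      rw [hfr, ← Submodule.Quotient.mk_smul]; simp
    · exact left_lt_sup.2 fun hle => hxI (hle (Ideal.mem_span_singleton_self x))
  · rw [Ideal.not_isPrime_iff] at hp
    obtain ⟨a, ha, b, hb, hab⟩ := hp.resolve_left htop
    let J : Ideal R := Submodule.comap (LinearMap.mulRight R a) I
    have hJ : ∀ r, r ∈ J ↔ r * a ∈ I := fun r => Iff.rfl
    obtain ⟨f, g, hfr, hf, hg, hfg⟩ := quotient_exact I J a hJ
    refine ExtVan.contra₂ hf hg hfg (ih _ ?_ _ hi) (ih _ ?_ _ hi)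
    · refine lt_of_le_of_ne (fun r hr => (hJ r).2 (I.mul_mem_right _ hr)) ?_
      intro hIJ
      exact hb (hIJ ▸ (hJ b).2 (by rwa [mul_comm]))
    · exact left_lt_sup.2 fun hle => ha (hle (Ideal.mem_span_singleton_self a))

end

/-! ### Tensoring with a flat module -/

section
variable {R : Type u} [CommRing R] [IsNoetherianRing R]
variable (F Z C : Type u) [AddCommGroup F] [Module R F] [Module.Flat R F]
  [AddCommGroup Z] [Module R Z] [Module.Finite R Z] [AddCommGroup C] [Module R C]

/-- For `F` flat and `Z` finite over a Noetherian ring, `F ⊗ Hom(Z, C) → Hom(Z, F ⊗ C)` is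
surjective. -/
lemma lTensorHom_surjective :
    Function.Surjective (TensorProduct.lTensorHomToHomLTensor (.id R) Z F C) := by
  intro φ
  obtain ⟨n, K, g, hg, hK⟩ := exists_finite_cover R Z
  obtain ⟨m, a', ha'⟩ := Module.Finite.exists_fin' R K
  let a : (Fin m → R) →ₗ[R] (Fin n → R) := K.subtype ∘ₗ a'
  have hag : g ∘ₗ a = 0 := by
    ext i; exact hK.apply_apply_eq_zero _
  -- the sequence `0 → Hom(Z,C) → Hom(R^n,C) → Hom(R^m,C)`
  have hex : Function.Exact (LinearMap.lcomp R C g) (LinearMap.lcomp R C a) := by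
    intro ψ
    constructor
    · intro h
      have h0 : ∀ x, g x = 0 → ψ x = 0 := by
        intro x hx
        obtain ⟨k, rfl⟩ := (hK x).1 hx
        obtain ⟨y, rfl⟩ := ha' k
        exact LinearMap.congr_fun h y
      refine ⟨(LinearMap.ker g).liftQ ψ (fun x hx => h0 x hx) ∘ₗ
        (g.quotKerEquivOfSurjective hg).symm.toLinearMap, ?_⟩
      refine LinearMap.ext fun x => ?_
      have : (g.quotKerEquivOfSurjective hg).symm (g x) = Submodule.Quotient.mk x := by
        rw [LinearEquiv.symm_apply_eq]; rfl
      simp only [LinearMap.lcomp_apply, LinearMap.comp_apply, LinearEquiv.coe_coe, this]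
      rfl
    · rintro ⟨ψ, rfl⟩
      ext x
      have := LinearMap.congr_fun hag (Pi.single x 1)
      simp only [LinearMap.comp_apply, LinearMap.zero_apply] at this
      simp [this]
  have hexF := Module.Flat.lTensor_exact F hex
  let en := lTensorHomEquivHomLTensor R (Fin n → R) F C
  let em := lTensorHomEquivHomLTensor R (Fin m → R) F C
  obtain ⟨t, ht⟩ : ∃ t, en t = φ ∘ₗ g := ⟨en.symm (φ ∘ₗ g), by simp⟩
  have key : ∀ t, em ((LinearMap.lcomp R C a).lTensor F t) = en t ∘ₗ a := by
    intro t
    induction t with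
    | zero => simp
    | add x y hx hy => rw [map_add, map_add, hx, hy, map_add, LinearMap.add_comp]
    | tmul f h =>
      ext i
      simp [em, en, lTensorHomEquivHomLTensor_apply]
  have key' : ∀ t, en ((LinearMap.lcomp R C g).lTensor F t) =
      (TensorProduct.lTensorHomToHomLTensor (.id R) Z F C t) ∘ₗ g := by
    intro t
    induction t with
    | zero => simp
    | add x y hx hy => rw [map_add, map_add, hx, hy, map_add, LinearMap.add_comp]
    | tmul f h =>
      ext i
      simp [en, lTensorHomEquivHomLTensor_apply]
  have h0 : (LinearMap.lcomp R C a).lTensor F t = 0 := by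
    apply em.injective
    rw [key, ht, LinearMap.comp_assoc, hag]; simp
  obtain ⟨s, rfl⟩ := (hexF t).1 h0
  refine ⟨s, ?_⟩
  rw [key'] at ht
  ext z
  obtain ⟨y, rfl⟩ := hg z
  exact LinearMap.congr_fun ht y

/-- Vanishing of `Ext^i(Z, C)` passes to flat coefficients `F ⊗ C`. -/
lemma ExtVan.flat_tensor {Z C : Type u} [AddCommGroup Z] [Module R Z] [Module.Finite R Z]
    [AddCommGroup C] [Module R C] {i : ℕ} (h : ExtVan R Z C i) : ExtVan R Z (F ⊗[R] C) i := by
  have aux : ∀ (i : ℕ) (Z : Type u) [AddCommGroup Z] [Module R Z] [Module.Finite R Z],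
      ExtVan R Z C (i + 1) → ExtVan R Z (F ⊗[R] C) (i + 1) := by
    intro i
    induction i with
    | zero =>
      intro Z _ _ _ h
      obtain ⟨n, K, g, hg, hK⟩ := exists_finite_cover R Z
      rw [extVan_one K.injective_subtype hg hK] at h ⊢
      intro φ
      obtain ⟨t, rfl⟩ := lTensorHom_surjective F K C φ
      induction t with
      | zero => exact ⟨0, by simp⟩
      | add x y hx hy =>
        obtain ⟨a, ha⟩ := hx
        obtain ⟨b, hb⟩ := hy
        exact ⟨a + b, by rw [LinearMap.add_comp, ha, hb, map_add]⟩
      | tmul f η =>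
        obtain ⟨ψ, rfl⟩ := h η
        refine ⟨TensorProduct.mk R F C f ∘ₗ ψ, ?_⟩
        ext x
        simp
    | succ i ih =>
      intro Z _ _ _ h
      obtain ⟨n, K, g, hg, hK⟩ := exists_finite_cover R Z
      rw [extVan_shift K.injective_subtype hg hK] at h ⊢
      exact ih K h
  cases i with
  | zero =>
    rw [extVan_zero] at h ⊢
    intro φ
    obtain ⟨t, rfl⟩ := lTensorHom_surjective F Z C φ
    induction t with
    | zero => simp
    | add x y hx hy => rw [map_add, hx, hy, add_zero]
    | tmul f η =>
      rw [h η]; ext; simp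
  | succ i => exact aux i Z h

end

/-! ### Base change -/

section
variable {R : Type u} [CommRing R]
variable (A : Type u) [CommRing A] [Algebra R A]
variable {Y : Type u} [AddCommGroup Y] [Module R Y] [Module A Y] [IsScalarTower R A Y]

lemma baseChange_ses {K P Z : Type u} [AddCommGroup K] [Module R K] [AddCommGroup P] [Module R P]
    [AddCommGroup Z] [Module R Z] {f : K →ₗ[R] P} {g : P →ₗ[R] Z}
    (hg : Function.Surjective g) (h : Function.Exact f g) :
    Function.Surjective (g.baseChange A) ∧ Function.Exact (f.baseChange A) (g.baseChange A) :=
  ⟨LinearMap.lTensor_surjective A hg, lTensor_exact A h hg⟩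

/-- Base change for `Ext` into an `A`-module, for any class `Q` of `R`-modules on which `A ⊗ -` is
exact enough: `Ext_R(Z, Y) = Ext_A(A ⊗ Z, Y)`. -/
lemma extVan_baseChange_aux (Q : (Z : Type u) → [AddCommGroup Z] → [Module R Z] → Prop)
    (hQ : ∀ (Z P : Type u) [AddCommGroup Z] [Module R Z] [AddCommGroup P] [Module R P]
      [Module.Free R P] (K : Submodule R P) (g : P →ₗ[R] Z), Function.Surjective g →
      Function.Exact K.subtype g → Q Z → Q K ∧ Function.Injective (K.subtype.baseChange A))
    (Z : Type u) [AddCommGroup Z] [Module R Z] (hZ : Q Z) (i : ℕ) :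
    ExtVan R Z Y i ↔ ExtVan A (A ⊗[R] Z) Y i := by
  have aux : ∀ (i : ℕ) (Z : Type u) [AddCommGroup Z] [Module R Z], Q Z →
      (ExtVan R Z Y (i + 1) ↔ ExtVan A (A ⊗[R] Z) Y (i + 1)) := by
    intro i
    induction i with
    | zero =>
      intro Z _ _ hZ
      obtain ⟨P, _, _, _, K, g, hg, hK⟩ := exists_free_cover R Z
      obtain ⟨-, hinj⟩ := hQ Z P K g hg hK hZ
      obtain ⟨hg', hK'⟩ := baseChange_ses A hg hK
      rw [extVan_one K.injective_subtype hg hK, extVan_one hinj hg' hK']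
      constructor
      · intro H φ
        obtain ⟨ψ, hψ⟩ := H ((LinearMap.liftBaseChangeEquiv A).symm φ)
        refine ⟨LinearMap.liftBaseChangeEquiv A ψ, ?_⟩
        apply (LinearMap.liftBaseChangeEquiv A).symm.injective
        rw [← hψ]
        ext k
        simp
      · intro H φ
        obtain ⟨ψ, hψ⟩ := H (LinearMap.liftBaseChangeEquiv A φ)
        refine ⟨(LinearMap.liftBaseChangeEquiv A).symm ψ, ?_⟩
        ext k
        have := LinearMap.congr_fun hψ (1 ⊗ₜ k)
        simpa using this
    | succ i ih =>
      intro Z _ _ hZ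
      obtain ⟨P, _, _, _, K, g, hg, hK⟩ := exists_free_cover R Z
      obtain ⟨hQK, hinj⟩ := hQ Z P K g hg hK hZ
      obtain ⟨hg', hK'⟩ := baseChange_ses A hg hK
      rw [extVan_shift K.injective_subtype hg hK, extVan_shift hinj hg' hK']
      exact ih K hQK
  cases i with
  | zero =>
    rw [extVan_zero, extVan_zero]
    constructor
    · intro H φ
      apply (LinearMap.liftBaseChangeEquiv A).symm.injective
      rw [H ((LinearMap.liftBaseChangeEquiv A).symm φ), map_zero]
    · intro H φ
      apply (LinearMap.liftBaseChangeEquiv A).injective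
      rw [H (LinearMap.liftBaseChangeEquiv A φ), map_zero]
  | succ i => exact aux i Z hZ

/-- Adjunction: `A ⊗ -` is exact and preserves free modules, so `Ext_R(Z, Y) = Ext_A(A ⊗ Z, Y)` for
an `A`-module `Y`. -/
lemma extVan_baseChange_flat [Module.Flat R A] (Z : Type u) [AddCommGroup Z] [Module R Z] (i : ℕ) :
    ExtVan R Z Y i ↔ ExtVan A (A ⊗[R] Z) Y i :=
  extVan_baseChange_aux A (fun Z [AddCommGroup Z] [Module R Z] => True)
    (fun _ _ _ _ _ _ _ K _ _ _ _ =>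
    ⟨trivial, Module.Flat.lTensor_preserves_injective_linearMap _ K.injective_subtype⟩) Z trivial i

end

section
variable {R : Type u} [CommRing R] {x : R}

lemma one_tmul_eq_zero_iff {M : Type u} [AddCommGroup M] [Module R M] (m : M) :
    (1 : R ⧸ Ideal.span {x}) ⊗ₜ[R] m = 0 ↔ ∃ m', m = x • m' := by
  rw [← (TensorProduct.quotTensorEquivQuotSMul M (Ideal.span {x})).map_eq_zero_iff]
  rw [TensorProduct.quotTensorEquivQuotSMul_mk_one_tmul, Submodule.Quotient.mk_eq_zero,
    Submodule.ideal_span_singleton_smul, Submodule.mem_smul_pointwise_iff_exists]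
  constructor
  · rintro ⟨m', -, rfl⟩; exact ⟨m', rfl⟩
  · rintro ⟨m', rfl⟩; exact ⟨m', trivial, rfl⟩

lemma exists_one_tmul {M : Type u} [AddCommGroup M] [Module R M] (t : (R ⧸ Ideal.span {x}) ⊗[R] M) :
    ∃ m : M, (1 : R ⧸ Ideal.span {x}) ⊗ₜ[R] m = t := by
  induction t with
  | zero => exact ⟨0, by simp⟩
  | add a b ha hb =>
    obtain ⟨a, rfl⟩ := ha
    obtain ⟨b, rfl⟩ := hb
    exact ⟨a + b, TensorProduct.tmul_add _ _ _⟩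
  | tmul a m =>
    obtain ⟨r, rfl⟩ := Ideal.Quotient.mk_surjective a
    refine ⟨r • m, ?_⟩
    rw [← TensorProduct.smul_tmul]
    congr 1
    rw [Algebra.smul_def, mul_one]; rfl

lemma mk_exact (M : Type u) [AddCommGroup M] [Module R M] :
    Function.Surjective (TensorProduct.mk R (R ⧸ Ideal.span {x}) M 1) ∧
    Function.Exact (x • LinearMap.id : M →ₗ[R] M) (TensorProduct.mk R (R ⧸ Ideal.span {x}) M 1) := by
  refine ⟨exists_one_tmul, fun m => ?_⟩
  rw [TensorProduct.mk_apply, one_tmul_eq_zero_iff]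
  constructor
  · rintro ⟨m', rfl⟩; exact ⟨m', rfl⟩
  · rintro ⟨m', rfl⟩; exact ⟨m', rfl⟩

lemma baseChange_injective_of_regular {Z P : Type u} [AddCommGroup Z] [Module R Z]
    [AddCommGroup P] [Module R P] {K : Submodule R P} {g : P →ₗ[R] Z}
    (h : Function.Exact K.subtype g) (hZ : IsSMulRegular Z x) :
    Function.Injective (K.subtype.baseChange (R ⧸ Ideal.span {x})) := by
  rw [← LinearMap.ker_eq_bot, LinearMap.ker_eq_bot']
  intro t ht
  obtain ⟨k, rfl⟩ := exists_one_tmul t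
  rw [LinearMap.baseChange_tmul, one_tmul_eq_zero_iff] at ht
  obtain ⟨p, hp⟩ := ht
  have h1 : x • g p = 0 := by rw [← map_smul, ← hp]; exact h.apply_apply_eq_zero k
  obtain ⟨k', rfl⟩ := (h p).1 (hZ (by simpa using h1))
  rw [one_tmul_eq_zero_iff]
  exact ⟨k', Subtype.ext hp⟩

lemma extVan_baseChange_quot {Y : Type u} [AddCommGroup Y] [Module R Y] [Module (R ⧸ Ideal.span {x}) Y]
    [IsScalarTower R (R ⧸ Ideal.span {x}) Y] (hx : IsSMulRegular R x)
    (Z : Type u) [AddCommGroup Z] [Module R Z] (hZ : IsSMulRegular Z x) (i : ℕ) :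
    ExtVan R Z Y i ↔ ExtVan (R ⧸ Ideal.span {x}) ((R ⧸ Ideal.span {x}) ⊗[R] Z) Y i := by
  refine extVan_baseChange_aux (R ⧸ Ideal.span {x}) (fun Z [AddCommGroup Z] [Module R Z] => IsSMulRegular Z x) ?_ Z hZ i
  intro Z P _ _ _ _ _ K g hg hK hZ
  refine ⟨?_, baseChange_injective_of_regular hK hZ⟩
  have hP : IsSMulRegular P x := Module.Flat.isSMulRegular_of_nonZeroDivisors
    (mem_nonZeroDivisors_iff_right.2 fun y hy => hx (by simpa [mul_comm] using hy))
  exact hP.submodule K x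

/-! ### The connecting class of multiplication by a regular element -/

section Rees
variable {Y Y' W : Type u} [AddCommGroup Y] [Module R Y] [AddCommGroup Y'] [Module R Y']
  [AddCommGroup W] [Module R W] {π : Y →ₗ[R] Y'} (hY : IsSMulRegular Y x)
  (hπ : Function.Surjective π) (hex : Function.Exact (x • LinearMap.id : Y →ₗ[R] Y) π)

include hY in
lemma smul_id_injective : Function.Injective (x • LinearMap.id : Y →ₗ[R] Y) := hY

/-- The connecting class in `Ext¹(Y/xY, Y)`. -/
noncomputable def δ : Ext (ModuleCat.of R Y') (ModuleCat.of R Y) 1 :=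
  (shortExact (smul_id_injective hY) hπ hex).extClass

lemma mk₀_sub {X Y : ModuleCat.{u} R} (f g : X ⟶ Y) :
    Ext.mk₀ (f - g) = Ext.mk₀ f - Ext.mk₀ g :=
  Ext.addEquiv₀.symm.map_sub f g

/-- Injectivity holds because a homomorphism from `W` to `Y` vanishes: `x` kills `W` and is regular
on `Y`. -/
lemma δ_injective (hW : ∀ w : W, x • w = 0) (φ : W →ₗ[R] Y')
    (h : (Ext.mk₀ (ModuleCat.ofHom φ)).comp (δ hY hπ hex) (zero_add 1) = 0) : φ = 0 := by
  obtain ⟨y, hy⟩ := Ext.covariant_sequence_exact₃ _ (shortExact (smul_id_injective hY) hπ hex)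
    _ (zero_add 1) h
  obtain ⟨ψ, rfl⟩ := Ext.homEquiv₀.symm.surjective y
  have hψ : ψ = 0 := by
    ext w
    apply hY
    change x • ψ.hom w = x • (0 : Y)
    rw [← map_smul, hW, map_zero, smul_zero]
  rw [hψ, Ext.homEquiv₀_symm_apply, Ext.mk₀_zero, Ext.zero_comp] at hy
  have := Ext.homEquiv₀.symm.injective (a₁ := 0) (a₂ := ModuleCat.ofHom φ) (by simpa using hy)
  exact (congrArg ModuleCat.Hom.hom this).symm

/-- Surjectivity holds because multiplication by `x` on `Ext¹(W, Y)` is zero, `x` killing `W`. -/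
lemma δ_surjective (hW : ∀ w : W, x • w = 0) (β : Ext (ModuleCat.of R W) (ModuleCat.of R Y) 1) :
    ∃ φ : W →ₗ[R] Y', (Ext.mk₀ (ModuleCat.ofHom φ)).comp (δ hY hπ hex) (zero_add 1) = β := by
  have h1 : ModuleCat.ofHom (x • LinearMap.id : Y →ₗ[R] Y) = x • 𝟙 (ModuleCat.of R Y) := rfl
  have h2 : x • 𝟙 (ModuleCat.of R W) = 0 := by
    ext w; exact hW w
  obtain ⟨y, hy⟩ := Ext.covariant_sequence_exact₁ _ (shortExact (smul_id_injective hY) hπ hex)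
    β (by
      change β.comp (Ext.mk₀ (ModuleCat.ofHom (x • LinearMap.id : Y →ₗ[R] Y))) _ = 0
      rw [h1, Ext.mk₀_smul, Ext.comp_smul, Ext.comp_mk₀_id]
      rw [← Ext.mk₀_id_comp β, ← Ext.smul_comp, ← Ext.mk₀_smul, h2]
      simp) (zero_add 1)
  obtain ⟨φ, rfl⟩ := Ext.homEquiv₀.symm.surjective y
  exact ⟨φ.hom, hy⟩

include hY hπ hex in
lemma rees_zero (hW : ∀ w : W, x • w = 0) : ExtVan R W Y 1 ↔ ∀ φ : W →ₗ[R] Y', φ = 0 := by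
  constructor
  · intro h φ
    exact δ_injective hY hπ hex hW φ
      (Subsingleton.elim (h := (h : Subsingleton (Ext (ModuleCat.of R W) (ModuleCat.of R Y) 1))) _ _)
  · intro h
    refine subsingleton_of_forall_eq 0 fun β => ?_
    obtain ⟨φ, rfl⟩ := δ_surjective hY hπ hex hW β
    rw [h φ]
    have : ModuleCat.ofHom (0 : W →ₗ[R] Y') = 0 := rfl
    rw [this, Ext.mk₀_zero, Ext.zero_comp]

include hY hπ hex in
lemma rees_one {K F : Type u} [AddCommGroup K] [Module R K] [AddCommGroup F] [Module R F]
    (hF : ∀ w : F, x • w = 0) {f : K →ₗ[R] F} {g : F →ₗ[R] W}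
    (hf : Function.Injective f) (hg : Function.Surjective g) (h : Function.Exact f g)
    (hF2 : ExtVan R F Y 2) :
    ExtVan R W Y 2 ↔ ∀ φ : K →ₗ[R] Y', ∃ ψ : F →ₗ[R] Y', ψ ∘ₗ f = φ := by
  have hK : ∀ w : K, x • w = 0 := fun w => hf (by rw [map_smul, hF, map_zero])
  have comp (φ : K →ₗ[R] Y') (ψ : F →ₗ[R] Y') (hh : ψ ∘ₗ f = φ) :
      (Ext.mk₀ (ModuleCat.ofHom φ)).comp (δ hY hπ hex) (zero_add 1) =
      (Ext.mk₀ (ModuleCat.ofHom f)).comp ((Ext.mk₀ (ModuleCat.ofHom ψ)).comp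
        (δ hY hπ hex) (zero_add 1)) (zero_add 1) := by
    have : ModuleCat.ofHom φ = ModuleCat.ofHom f ≫ ModuleCat.ofHom ψ := by rw [← hh]; rfl
    rw [this, Ext.mk₀_comp_mk₀_assoc]
  constructor
  · intro hW φ
    obtain ⟨x₂, hx₂⟩ := Ext.contravariant_sequence_exact₁ (shortExact hf hg h) _
      ((Ext.mk₀ (ModuleCat.ofHom φ)).comp (δ hY hπ hex) (zero_add 1)) rfl
      (Subsingleton.elim (h := (hW : Subsingleton (Ext (ModuleCat.of R W) (ModuleCat.of R Y) 2)))
        _ _)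
    obtain ⟨ψ, rfl⟩ := δ_surjective hY hπ hex hF x₂
    refine ⟨ψ, ?_⟩
    rw [← sub_eq_zero]
    refine δ_injective hY hπ hex hK _ ?_
    have : ModuleCat.ofHom (ψ ∘ₗ f - φ) = ModuleCat.ofHom (ψ ∘ₗ f) - ModuleCat.ofHom φ := rfl
    rw [this, mk₀_sub, sub_eq_add_neg, Ext.add_comp, Ext.neg_comp, comp _ ψ rfl, ← sub_eq_add_neg,
      sub_eq_zero]
    exact hx₂
  · intro H
    refine subsingleton_of_forall_eq 0 fun β => ?_
    obtain ⟨γ, rfl⟩ := Ext.contravariant_sequence_exact₃ (shortExact hf hg h) _ β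
      (Subsingleton.elim (h := (hF2 : Subsingleton (Ext (ModuleCat.of R F) (ModuleCat.of R Y) 2)))
        _ _) (n₀ := 1) rfl
    obtain ⟨φ, rfl⟩ := δ_surjective hY hπ hex hK γ
    obtain ⟨ψ, hψ⟩ := H φ
    rw [comp φ ψ hψ]
    exact (shortExact hf hg h).extClass_comp_assoc _

end Rees

end

/-! ### Rees' shift over `R/x` -/

section
variable {R : Type u} [CommRing R] {x : R}

lemma algebraMap_quot_surjective :
    Function.Surjective (algebraMap R (R ⧸ Ideal.span {x})) := Ideal.Quotient.mk_surjective

lemma smul_eq_zero_of_quot {W : Type u} [AddCommGroup W] [Module R W]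
    [Module (R ⧸ Ideal.span {x}) W] [IsScalarTower R (R ⧸ Ideal.span {x}) W] (w : W) :
    x • w = 0 := by
  rw [← algebraMap_smul (R ⧸ Ideal.span {x}) x w]
  have : algebraMap R (R ⧸ Ideal.span {x}) x = 0 :=
    Ideal.Quotient.eq_zero_iff_mem.2 (Ideal.mem_span_singleton_self x)
  rw [this, zero_smul]

lemma extVan_free_quot (hx : IsSMulRegular R x) (ι Y : Type u) [AddCommGroup Y] [Module R Y]
    (j : ℕ) : ExtVan R (ι →₀ (R ⧸ Ideal.span {x})) Y (j + 2) := by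
  have h := mk_exact (x := x) (ι →₀ R)
  have hP : IsSMulRegular (ι →₀ R) x := IsSMulRegular.finsupp hx
  have h1 : ExtVan R ((R ⧸ Ideal.span {x}) ⊗[R] (ι →₀ R)) Y (j + 2) := by
    rw [extVan_shift (smul_id_injective hP) h.1 h.2]
    exact extVan_proj _ _ _
  classical
  exact h1.of_equiv (TensorProduct.finsuppScalarRight R R (R ⧸ Ideal.span {x}) ι)
    (LinearEquiv.refl R Y)

/-- Every `R/x`-module has a free cover over `R/x`, which has projective dimension one over `R`. -/
lemma exists_quot_cover (hx : IsSMulRegular R x) (W : Type u) [AddCommGroup W]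
    [Module (R ⧸ Ideal.span {x}) W] :
    ∃ (F : Type u) (_ : AddCommGroup F) (_ : Module R F) (_ : Module (R ⧸ Ideal.span {x}) F)
      (_ : IsScalarTower R (R ⧸ Ideal.span {x}) F) (_ : Module.Free (R ⧸ Ideal.span {x}) F)
      (K : Submodule (R ⧸ Ideal.span {x}) F) (g : F →ₗ[R ⧸ Ideal.span {x}] W),
      Function.Surjective g ∧ Function.Exact K.subtype g ∧
      ∀ (Y : Type u) (_ : AddCommGroup Y) (_ : Module R Y) (j : ℕ), ExtVan R F Y (j + 2) :=
  ⟨W →₀ (R ⧸ Ideal.span {x}), inferInstance, inferInstance, inferInstance, inferInstance,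
    inferInstance, LinearMap.ker (Finsupp.linearCombination _ id), Finsupp.linearCombination _ id,
    Finsupp.linearCombination_id_surjective _ W, LinearMap.exact_subtype_ker_map _,
    fun Y _ _ j => extVan_free_quot hx W Y j⟩

/-- Rees' change of rings: if `x` is regular on `R` and on `Y`, then for every `R/x`-module `W`,
`Ext^{i+1}_R(W, Y) = Ext^i_{R/x}(W, Y/xY)`. -/
lemma rees (hx : IsSMulRegular R x) {Y : Type u} [AddCommGroup Y] [Module R Y]
    (hY : IsSMulRegular Y x) (i : ℕ) (W : Type u) [AddCommGroup W] [Module R W]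
    [Module (R ⧸ Ideal.span {x}) W] [IsScalarTower R (R ⧸ Ideal.span {x}) W] :
    ExtVan R W Y (i + 1) ↔
      ExtVan (R ⧸ Ideal.span {x}) W ((R ⧸ Ideal.span {x}) ⊗[R] Y) i := by
  have hex := mk_exact (x := x) Y
  cases i with
  | zero =>
    rw [rees_zero hY hex.1 hex.2 smul_eq_zero_of_quot, extVan_zero]
    constructor
    · intro h φ
      have := h (φ.restrictScalars R)
      ext w
      exact LinearMap.congr_fun this w
    · intro h φ
      have := h (φ.extendScalarsOfSurjective algebraMap_quot_surjective)
      ext w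
      exact LinearMap.congr_fun this w
  | succ i =>
    induction i generalizing W with
    | zero =>
      obtain ⟨F, _, _, _, _, _, K, g, hg, hK, hF⟩ := exists_quot_cover hx W
      rw [extVan_one K.injective_subtype hg hK]
      rw [rees_one (f := K.subtype.restrictScalars R) (g := g.restrictScalars R) hY hex.1 hex.2
        smul_eq_zero_of_quot K.injective_subtype hg hK (hF _ _ _ 0)]
      constructor
      · intro H φ
        obtain ⟨ψ, hψ⟩ := H (φ.restrictScalars R)
        refine ⟨ψ.extendScalarsOfSurjective algebraMap_quot_surjective, ?_⟩
        ext w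
        exact LinearMap.congr_fun hψ w
      · intro H φ
        obtain ⟨ψ, hψ⟩ := H (φ.extendScalarsOfSurjective algebraMap_quot_surjective)
        refine ⟨ψ.restrictScalars R, ?_⟩
        ext w
        exact LinearMap.congr_fun hψ w
    | succ i ih =>
      obtain ⟨F, _, _, _, _, _, K, g, hg, hK, hF⟩ := exists_quot_cover hx W
      rw [extVan_shift K.injective_subtype hg hK]
      refine Iff.trans ?_ (ih K)
      have hf' : Function.Injective (K.subtype.restrictScalars R) := K.injective_subtype
      have hg' : Function.Surjective (g.restrictScalars R) := hg
      have hK' : Function.Exact (K.subtype.restrictScalars R) (g.restrictScalars R) := hK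
      exact ⟨fun h => ExtVan.contra₁ hf' hg' hK' (hF _ _ _ _) h,
        fun h => ExtVan.contra₃ hf' hg' hK' h (hF _ _ _ _)⟩

end

/-! ### Semidualizing modules -/

section
variable {R : Type u} [CommRing R]

/-- If `Ext¹(W, K) = 0`, maps from `W` lift along the surjection `P → Z` with kernel `K`. -/
lemma ExtVan.lift {K P Z W : Type u} [AddCommGroup K] [Module R K] [AddCommGroup P] [Module R P]
    [AddCommGroup Z] [Module R Z] [AddCommGroup W] [Module R W]
    {f : K →ₗ[R] P} {g : P →ₗ[R] Z}
    (hf : Function.Injective f) (hg : Function.Surjective g) (h : Function.Exact f g)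
    (hW : ExtVan R W K 1) (φ : W →ₗ[R] Z) : ∃ ψ : W →ₗ[R] P, g ∘ₗ ψ = φ := by
  have hW' : Subsingleton (Ext (ModuleCat.of R W) (ModuleCat.of R K) 1) := hW
  obtain ⟨y, hy⟩ := Ext.covariant_sequence_exact₃ _ (shortExact hf hg h)
    (Ext.mk₀ (ModuleCat.ofHom φ)) (zero_add 1) (Subsingleton.elim _ _)
  obtain ⟨ψ, rfl⟩ := Ext.homEquiv₀.symm.surjective y
  refine ⟨ψ.hom, ?_⟩
  rw [Ext.homEquiv₀_symm_apply, Ext.mk₀_comp_mk₀] at hy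
  have := Ext.homEquiv₀.symm.injective hy
  exact congrArg ModuleCat.Hom.hom this

variable (R) in
/-- The semidualizing property, with the homothety bijection split into its two halves and `Ext`
taken in the derived-category sense. -/
structure SD (C : Type u) [AddCommGroup C] [Module R C] : Prop where
  fin : Module.Finite R C
  endo : ∀ φ : C →ₗ[R] C, ∃ r : R, ∀ c, φ c = r • c
  faithful : ∀ r : R, (∀ c : C, r • c = 0) → r = 0
  ext : ∀ i, ExtVan R C C (i + 1)

lemma sd_iff (C : Type u) [AddCommGroup C] [Module R C] : IsSemidualizing R C ↔ SD R C := by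
  constructor
  · rintro ⟨h1, ⟨h2, h3⟩, h4⟩
    refine ⟨h1, fun φ => ?_, fun r hr => ?_, fun i => ?_⟩
    · obtain ⟨r, rfl⟩ := h3 φ
      exact ⟨r, fun c => rfl⟩
    · apply h2
      ext c
      simpa using hr c
    · exact (subsingleton_extM_iff R C C _).1 (h4 _ i.succ_pos)
  · rintro ⟨h1, h2, h3, h4⟩
    refine ⟨h1, ⟨fun r s hrs => ?_, fun φ => ?_⟩, fun i hi => ?_⟩
    · rw [← sub_eq_zero]
      refine h3 _ fun c => ?_
      rw [sub_smul, sub_eq_zero]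
      exact LinearMap.congr_fun hrs c
    · obtain ⟨r, hr⟩ := h2 φ
      exact ⟨r, by ext c; exact (hr c).symm⟩
    · obtain ⟨i, rfl⟩ := Nat.exists_eq_succ_of_ne_zero hi.ne'
      exact (subsingleton_extM_iff R C C _).2 (h4 i)

lemma SD.equiv {C C' : Type u} [AddCommGroup C] [Module R C] [AddCommGroup C'] [Module R C']
    (e : C ≃ₗ[R] C') (h : SD R C) : SD R C' := by
  obtain ⟨h1, h2, h3, h4⟩ := h
  refine ⟨Module.Finite.equiv e, fun φ => ?_, fun r hr => ?_, fun i => (h4 i).of_equiv e e⟩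
  · obtain ⟨r, hr⟩ := h2 (e.symm.toLinearMap ∘ₗ φ ∘ₗ e.toLinearMap)
    refine ⟨r, fun c => ?_⟩
    have := hr (e.symm c)
    simp only [LinearMap.comp_apply, LinearEquiv.coe_coe, e.apply_symm_apply] at this
    rw [← map_smul] at this
    exact e.symm.injective this
  · refine h3 r fun c => e.injective ?_
    rw [map_smul, hr, map_zero]

variable {C : Type u} [AddCommGroup C] [Module R C]

/-- A finite faithful module maps nontrivially to `R/p` for every prime `p`. -/
lemma exists_nonzero_hom [IsNoetherianRing R] [Module.Finite R C]
    (hC : ∀ r : R, (∀ c : C, r • c = 0) → r = 0) (p : Ideal R) [hp : p.IsPrime] :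
    ∃ φ : C →ₗ[R] R ⧸ p, φ ≠ 0 := by
  by_contra! hcon
  have : Subsingleton (C →ₗ[R] R ⧸ p) := ⟨fun a b => by rw [hcon a, hcon b]⟩
  obtain ⟨r, hr, hr'⟩ := IsSMulRegular.subsingleton_linearMap_iff.1 this
  have : r = 0 := hC r fun c => Module.mem_annihilator.1 hr c
  subst this
  have h1 := hr' (show (0 : R) • (1 : R ⧸ p) = (0 : R) • (0 : R ⧸ p) by simp)
  exact hp.ne_top (Ideal.Quotient.subsingleton_iff.1 (subsingleton_of_zero_eq_one h1.symm))

/-- An associated prime of a semidualizing module consists of zero divisors of the ring: some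
nonzero scalar is annihilated by it. -/
lemma SD.exists_annihilator [IsNoetherianRing R] (hC : SD R C) {p : Ideal R}
    (hp : p ∈ associatedPrimes R C) : ∃ s : R, s ≠ 0 ∧ ∀ x ∈ p, x * s = 0 := by
  have := hC.fin
  have hpp : p.IsPrime := hp.isPrime
  rw [AssociatedPrimes.mem_iff, isAssociatedPrime_iff_exists_injective_linearMap] at hp
  obtain ⟨-, f, hf⟩ := hp
  obtain ⟨φ, hφ⟩ := exists_nonzero_hom hC.faithful p
  obtain ⟨s, hs⟩ := hC.endo (f ∘ₗ φ)
  refine ⟨s, ?_, fun x hx => hC.faithful _ fun c => ?_⟩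
  · rintro rfl
    refine hφ (LinearMap.ext fun c => hf ?_)
    have := hs c
    simpa using this
  · rw [mul_smul, ← hs, ← map_smul, LinearMap.comp_apply]
    obtain ⟨y, hy⟩ := Ideal.Quotient.mk_surjective (φ c)
    rw [map_smul, ← hy]
    have : x • (Ideal.Quotient.mk p y) = Ideal.Quotient.mk p (x * y) := rfl
    rw [this, Ideal.Quotient.eq_zero_iff_mem.2 (p.mul_mem_right y hx), map_zero]

lemma isSMulRegular_of_ass {M : Type u} [AddCommGroup M] [Module R M] [IsNoetherianRing R] {x : R}
    (h : ∀ p ∈ associatedPrimes R M, x ∉ p) : IsSMulRegular M x := by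
  rw [isSMulRegular_iff_right_eq_zero_of_smul]
  intro m hm
  by_contra hm0
  have : x ∈ ⋃ p ∈ associatedPrimes R M, (p : Set R) := by
    rw [biUnion_associatedPrimes_eq_zero_divisors]
    exact ⟨m, hm0, hm⟩
  simp only [Set.mem_iUnion] at this
  obtain ⟨p, hp, hx⟩ := this
  exact h p hp hx

/-- An associated prime of `C` annihilates a nonzero element of `R`, so it contains no regular
element of `R`. -/
lemma SD.regular [IsNoetherianRing R] (hC : SD R C) {x : R} (hx : IsSMulRegular R x) :
    IsSMulRegular C x := by
  refine isSMulRegular_of_ass fun p hp hxp => ?_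
  obtain ⟨s, hs, h⟩ := hC.exists_annihilator hp
  exact hs (hx (by simpa using h x hxp))

/-- A finite family of generators of `C` gives an embedding of `R` in `C^n`. -/
lemma SD.exists_embedding (hC : SD R C) :
    ∃ (n : ℕ) (c : Fin n → C), ∀ r : R, (∀ i, r • c i = 0) → r = 0 := by
  have := hC.fin
  obtain ⟨n, c, hc⟩ := Module.Finite.exists_fin (R := R) (M := C)
  refine ⟨n, c, fun r hr => hC.faithful r fun d => ?_⟩
  have : d ∈ Submodule.span R (Set.range c) := by rw [hc]; trivial
  induction this using Submodule.span_induction with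
  | mem x h => obtain ⟨i, rfl⟩ := h; exact hr i
  | zero => simp
  | add x y _ _ hx hy => rw [smul_add, hx, hy, add_zero]
  | smul a x _ hx => rw [smul_comm, hx, smul_zero]

/-- Flat base change preserves semidualizing modules, since `Hom` and `Ext` out of finitely
generated modules commute with it. -/
lemma SD.baseChange_flat [IsNoetherianRing R] (hC : SD R C) (A : Type u) [CommRing A] [Algebra R A]
    [Module.Flat R A] : SD A (A ⊗[R] C) := by
  have := hC.fin
  refine ⟨inferInstance, fun φ => ?_, fun a ha => ?_, fun i => ?_⟩
  · obtain ⟨t, ht⟩ := lTensorHom_surjective A C C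
      (φ.restrictScalars R ∘ₗ TensorProduct.mk R A C 1)
    have key : ∀ t, ∃ a : A, ∀ c,
        (TensorProduct.lTensorHomToHomLTensor (.id R) C A C t) c = a ⊗ₜ[R] c := by
      intro t
      induction t with
      | zero => exact ⟨0, by simp⟩
      | add u v hu hv =>
        obtain ⟨a, ha⟩ := hu
        obtain ⟨b, hb⟩ := hv
        exact ⟨a + b, fun c => by rw [map_add, LinearMap.add_apply, ha, hb, TensorProduct.add_tmul]⟩
      | tmul a ψ =>
        obtain ⟨r, hr⟩ := hC.endo ψ
        refine ⟨r • a, fun c => ?_⟩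
        rw [TensorProduct.lTensorHomToHomLTensor_apply, hr, TensorProduct.smul_tmul]
    obtain ⟨a, ha⟩ := key t
    refine ⟨a, fun z => ?_⟩
    induction z with
    | zero => simp
    | add u v hu hv => rw [map_add, hu, hv, smul_add]
    | tmul b c =>
      have h1 : b ⊗ₜ[R] c = b • ((1 : A) ⊗ₜ[R] c) := by
        rw [TensorProduct.smul_tmul', smul_eq_mul, mul_one]
      have h2 := LinearMap.congr_fun ht c
      rw [ha] at h2
      have h3 : φ ((1 : A) ⊗ₜ[R] c) = a ⊗ₜ[R] c := h2.symm
      rw [h1, map_smul, h3, TensorProduct.smul_tmul', TensorProduct.smul_tmul',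
        TensorProduct.smul_tmul', smul_eq_mul, smul_eq_mul, smul_eq_mul, mul_one, mul_comm]
  · obtain ⟨n, c, hc⟩ := hC.exists_embedding
    let ι : R →ₗ[R] (Fin n → C) := LinearMap.pi fun i => LinearMap.toSpanSingleton R C (c i)
    have hι : Function.Injective ι := by
      rw [← LinearMap.ker_eq_bot, LinearMap.ker_eq_bot']
      exact fun r hr => hc r fun i => congrFun hr i
    have h1 := Module.Flat.lTensor_preserves_injective_linearMap (M := A) ι hι
    have h2 : a ⊗ₜ[R] (1 : R) = 0 := by
      apply h1
      apply (TensorProduct.piRight R R A (fun _ : Fin n => C)).injective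
      ext i
      simp only [LinearMap.lTensor_tmul, map_zero, Pi.zero_apply]
      have := ha (1 ⊗ₜ c i)
      rw [TensorProduct.smul_tmul', smul_eq_mul, mul_one] at this
      simpa [ι] using this
    have h3 := congrArg (TensorProduct.rid R A) h2
    simpa using h3
  · exact (extVan_baseChange_flat A C (i + 1)).1 (ExtVan.flat_tensor A (hC.ext i))

/-- If `x` is regular on `R`, then `C/xC` is semidualizing over `R/x`: the long exact sequence of
multiplication by `x` on `C` computes `Ext(C, C/xC)`, which is `Ext` over `R/x` of `C/xC` by itself. -/
lemma SD.quot [IsNoetherianRing R] (hC : SD R C) {x : R} (hx : IsSMulRegular R x) :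
    SD (R ⧸ Ideal.span {x}) ((R ⧸ Ideal.span {x}) ⊗[R] C) := by
  have := hC.fin
  have hxC := hC.regular hx
  have hex := mk_exact (x := x) C
  refine ⟨inferInstance, fun φ => ?_, fun a ha => ?_, fun i => ?_⟩
  · obtain ⟨ψ, hψ⟩ := ExtVan.lift (smul_id_injective hxC) hex.1 hex.2 (hC.ext 0)
      (φ.restrictScalars R ∘ₗ TensorProduct.mk R (R ⧸ Ideal.span {x}) C 1)
    obtain ⟨r, hr⟩ := hC.endo ψ
    refine ⟨Ideal.Quotient.mk _ r, fun z => ?_⟩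
    obtain ⟨c, rfl⟩ := exists_one_tmul z
    have h2 := LinearMap.congr_fun hψ c
    simp only [LinearMap.comp_apply, hr, TensorProduct.mk_apply] at h2
    refine Eq.trans (b := φ (1 ⊗ₜ c)) rfl (Eq.trans h2.symm ?_)
    rw [← TensorProduct.smul_tmul, TensorProduct.smul_tmul']
    rfl
  · obtain ⟨r, rfl⟩ := Ideal.Quotient.mk_surjective a
    have h1 : ∀ c : C, ∃ m', r • c = x • m' := by
      intro c
      rw [← one_tmul_eq_zero_iff, ← TensorProduct.smul_tmul]
      exact ha (1 ⊗ₜ c)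
    choose m hm using h1
    let ψ : C →ₗ[R] C :=
      { toFun := m
        map_add' := fun a b => hxC (by
          change x • m (a + b) = x • (m a + m b)
          rw [← hm, smul_add, hm, hm, smul_add])
        map_smul' := fun s a => hxC (by
          change x • m (s • a) = x • s • m a
          rw [← hm, smul_comm, hm, smul_comm]) }
    obtain ⟨s, hs⟩ := hC.endo ψ
    have h2 : r - x * s = 0 := by
      refine hC.faithful _ fun c => ?_
      rw [sub_smul, mul_smul, ← hs, hm]
      exact sub_self _
    rw [Ideal.Quotient.eq_zero_iff_mem, Ideal.mem_span_singleton]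
    exact ⟨s, sub_eq_zero.1 h2⟩
  · exact (extVan_baseChange_quot hx C hxC (i + 1)).1
      (ExtVan.cov₃ (smul_id_injective hxC) hex.1 hex.2 (hC.ext i) (hC.ext (i + 1)))

end

/-! ### Heights, quotients and local vanishing -/

section
variable {R : Type u} [CommRing R]

section
variable {x : R}

/-- Killing a regular element lowers the height of every prime containing it by one. -/
lemma height_quot [IsNoetherianRing R] (hx : IsSMulRegular R x) (p' : Ideal (R ⧸ Ideal.span {x}))
    [hp' : p'.IsPrime] :
    p'.height + 1 = (p'.comap (Ideal.Quotient.mk (Ideal.span {x}))).height := by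
  apply le_antisymm
  · have hmem : ∀ p' : Ideal (R ⧸ Ideal.span {x}),
        x ∈ p'.comap (Ideal.Quotient.mk (Ideal.span {x})) := by
      intro p'
      rw [Ideal.mem_comap, Ideal.Quotient.eq_zero_iff_mem.2 (Ideal.mem_span_singleton_self x)]
      exact p'.zero_mem
    have hreg : x ∈ nonZeroDivisors R := by
      rw [mem_nonZeroDivisors_iff_right]
      exact fun z hz => hx (by simpa [mul_comm] using hz)
    have key : ∀ (n : ℕ) (p' : Ideal (R ⧸ Ideal.span {x})) [p'.IsPrime],
        (p'.comap (Ideal.Quotient.mk (Ideal.span {x}))).height ≤ n → p'.height + 1 ≤ n := by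
      intro n
      induction n with
      | zero =>
        intro p' _ h
        have h0 : (p'.comap (Ideal.Quotient.mk (Ideal.span {x}))).height = 0 := by simpa using h
        rw [Ideal.height_eq_zero_iff] at h0
        exact absurd hreg (notMem_nonZeroDivisors_of_mem_mem_minimalPrimes (hmem p') h0)
      | succ n ih =>
        intro p' _ h
        rw [Ideal.height_le_iff] at h
        push_cast
        gcongr
        rw [Ideal.height_le_iff]
        intro q' hq' hlt
        have h1 := h (q'.comap (Ideal.Quotient.mk (Ideal.span {x}))) inferInstance
          ((Ideal.comap_mono hlt.le).lt_of_ne fun h => hlt.ne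
            (Ideal.comap_injective_of_surjective _ Ideal.Quotient.mk_surjective h))
        have h2 := ih q' (by
          push_cast at h1
          exact ENat.lt_add_one_iff (ENat.natCast_ne_top n) |>.1 h1)
        exact (ENat.add_one_le_iff (Ideal.height_ne_top hq'.ne_top)).1 h2
    obtain ⟨n, hn⟩ := ENat.ne_top_iff_exists.1
      (Ideal.height_ne_top (I := p'.comap (Ideal.Quotient.mk (Ideal.span {x})))
        (Ideal.IsPrime.ne_top inferInstance))
    rw [← hn]
    exact key n p' hn.ge
  · have hxm : x ∈ p'.comap (Ideal.Quotient.mk (Ideal.span {x})) := by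
      rw [Ideal.mem_comap, Ideal.Quotient.eq_zero_iff_mem.2 (Ideal.mem_span_singleton_self x)]
      exact p'.zero_mem
    have := Ideal.height_le_height_add_one_of_mem hxm
    rwa [Ideal.map_comap_of_surjective _ Ideal.Quotient.mk_surjective] at this

/-- The quotient of `R` by the preimage of `p'` is the quotient of `R/x` by `p'`. -/
lemma exists_quotComapEquiv (p' : Ideal (R ⧸ Ideal.span {x})) :
    Nonempty ((R ⧸ p'.comap (Ideal.Quotient.mk (Ideal.span {x}))) ≃ₗ[R]
      ((R ⧸ Ideal.span {x}) ⧸ p')) := by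
  let f : R →ₗ[R] ((R ⧸ Ideal.span {x}) ⧸ p') := Algebra.linearMap R _
  have hf : Function.Surjective f := by
    intro z
    obtain ⟨y, rfl⟩ := Ideal.Quotient.mk_surjective z
    obtain ⟨r, rfl⟩ := Ideal.Quotient.mk_surjective y
    exact ⟨r, rfl⟩
  have hk : LinearMap.ker f = p'.comap (Ideal.Quotient.mk (Ideal.span {x})) := by
    ext r
    rw [LinearMap.mem_ker, Ideal.mem_comap, ← Ideal.Quotient.eq_zero_iff_mem]
    rfl
  exact ⟨(Submodule.quotEquivOfEq _ _ hk.symm).trans (f.quotKerEquivOfSurjective hf)⟩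

/-- Rees' theorem for residue modules of primes containing the regular element. -/
lemma rees_quot (hx : IsSMulRegular R x) {Y : Type u} [AddCommGroup Y] [Module R Y]
    (hY : IsSMulRegular Y x) (p' : Ideal (R ⧸ Ideal.span {x})) (i : ℕ) :
    ExtVan R (R ⧸ p'.comap (Ideal.Quotient.mk (Ideal.span {x}))) Y (i + 1) ↔
      ExtVan (R ⧸ Ideal.span {x}) ((R ⧸ Ideal.span {x}) ⧸ p')
        ((R ⧸ Ideal.span {x}) ⊗[R] Y) i := by
  obtain ⟨e⟩ := exists_quotComapEquiv p'
  rw [← rees hx hY]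
  exact ⟨fun h => h.of_equiv e (.refl R Y), fun h => h.of_equiv e.symm (.refl R Y)⟩

end

lemma extVan_zero_of_regular {x : R} {I : Ideal R} (hx : x ∈ I) {Y : Type u} [AddCommGroup Y]
    [Module R Y] (hY : IsSMulRegular Y x) : ExtVan R (R ⧸ I) Y 0 := by
  rw [extVan_zero]
  intro φ
  refine LinearMap.ext fun z => hY ?_
  change x • φ z = x • 0
  rw [← map_smul, smul_zero]
  obtain ⟨r, rfl⟩ := Ideal.Quotient.mk_surjective z
  have : x • (Ideal.Quotient.mk I r) = Ideal.Quotient.mk I (x * r) := rfl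
  rw [this, Ideal.Quotient.eq_zero_iff_mem.2 (I.mul_mem_right r hx), map_zero]

/-- If `R/I` embeds in `R` and `C` is faithful, then `R/I` maps nontrivially to `C`. -/
lemma not_extVan_zero_of_embedding {C : Type u} [AddCommGroup C] [Module R C]
    (hC : ∀ r : R, (∀ c : C, r • c = 0) → r = 0) {I : Ideal R} (hI : I ≠ ⊤)
    (f : (R ⧸ I) →ₗ[R] R) (hf : Function.Injective f) : ¬ ExtVan R (R ⧸ I) C 0 := by
  rw [extVan_zero]
  intro h
  refine hI (Ideal.Quotient.subsingleton_iff.1 (subsingleton_of_zero_eq_one (hf ?_)))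
  rw [map_zero]
  symm
  refine hC _ fun c => ?_
  exact LinearMap.congr_fun (h (LinearMap.toSpanSingleton R C c ∘ₗ f)) 1

/-- The depth zero case of `local_vanishing`. The residue field embeds in `R`, so eventual vanishing
of `Ext^i(k, C)` propagates down to all positive degrees; then all
`Ext^i(Z, C)` with `i > 0` and `Z` finitely generated vanish, which forces dimension zero. -/
lemma local_vanishing_depth_zero [IsNoetherianRing R] [IsLocalRing R] {C : Type u}
    [AddCommGroup C] [Module R C] (hC : SD R C)
    (hreg : ∀ x ∈ IsLocalRing.maximalIdeal R, ¬ IsSMulRegular R x)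
    (hn : ∃ n, ∀ i, n ≤ i → ExtVan R (R ⧸ IsLocalRing.maximalIdeal R) C i)
    (i : ℕ) (hi : (i : ℕ∞) ≠ (IsLocalRing.maximalIdeal R).height) :
    ExtVan R (R ⧸ IsLocalRing.maximalIdeal R) C i := by
  classical
  have := hC.fin
  -- the residue field embeds in the ring
  obtain ⟨φ, hφ⟩ : ∃ φ : (R ⧸ IsLocalRing.maximalIdeal R) →ₗ[R] R, Function.Injective φ := by
    by_contra! hcon
    have hss : Subsingleton ((R ⧸ IsLocalRing.maximalIdeal R) →ₗ[R] R) := by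
      refine subsingleton_of_forall_eq 0 fun φ => ?_
      by_contra h0
      apply hcon φ
      have : IsSimpleModule R (R ⧸ IsLocalRing.maximalIdeal R) :=
        isSimpleModule_iff_isCoatom.2 (IsLocalRing.maximalIdeal.isMaximal R).out
      exact (LinearMap.injective_or_eq_zero φ).resolve_right h0
    obtain ⟨r, hr, hr'⟩ := IsSMulRegular.subsingleton_linearMap_iff.1 hss
    rw [Ideal.annihilator_quotient] at hr
    exact hreg r hr hr'
  have hmin := Nat.find_spec hn
  rcases hN : Nat.find hn with _ | N
  · rw [hN] at hmin
    exact hmin i (Nat.zero_le _)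
  rw [hN] at hmin
  have hnot : ¬ ExtVan R (R ⧸ IsLocalRing.maximalIdeal R) C N := by
    intro h
    refine Nat.find_min hn (m := N) (by omega) fun j hj => ?_
    rcases hj.eq_or_lt with rfl | hj
    · exact h
    · exact hmin j hj
  have hall : ∀ (Z : Type u) [AddCommGroup Z] [Module R Z] [Module.Finite R Z] (i : ℕ), N < i →
      ExtVan R Z C i := fun Z _ _ _ i hi => extVan_of_residue (n := N) (fun j hj => hmin j hj) Z i hi
  have hN0 : N = 0 := by
    rcases N with _ | N
    · rfl
    · exact absurd (ExtVan.contra₁ hφ (LinearMap.range φ).mkQ_surjective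
        (LinearMap.exact_map_mkQ_range φ) (extVan_proj R C N)
        (hall (R ⧸ LinearMap.range φ) (N + 2) (by omega))) hnot
  subst hN0
  have hht : (IsLocalRing.maximalIdeal R).height = 0 := by
    rw [Ideal.height_eq_zero_iff]
    by_contra hm
    obtain ⟨p, hp, hpm⟩ := Ideal.exists_minimalPrimes_le (bot_le (a := IsLocalRing.maximalIdeal R))
    have hpp : p.IsPrime := hp.1.1
    have hlt : p < IsLocalRing.maximalIdeal R := lt_of_le_of_ne hpm (by rintro rfl; exact hm hp)
    obtain ⟨x, hxm, hxp⟩ := SetLike.exists_of_lt hlt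
    have hinj : Function.Injective (x • LinearMap.id : (R ⧸ p) →ₗ[R] (R ⧸ p)) := by
      rw [← LinearMap.ker_eq_bot, LinearMap.ker_eq_bot']
      intro z hz
      obtain ⟨r, rfl⟩ := Ideal.Quotient.mk_surjective z
      have h1 : Ideal.Quotient.mk p (x * r) = 0 := hz
      rw [Ideal.Quotient.eq_zero_iff_mem] at h1 ⊢
      exact (hpp.mem_or_mem h1).resolve_left hxp
    have h0 : ExtVan R (R ⧸ p) C 0 :=
      extVan_of_smul (x := x) (f := x • LinearMap.id)
        (by rwa [IsLocalRing.jacobson_eq_maximalIdeal _ bot_ne_top]) rfl hinj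
        (LinearMap.range _).mkQ_surjective (LinearMap.exact_map_mkQ_range _)
        (hall _ 1 one_pos)
    have hass : p ∈ associatedPrimes R R := by
      refine Module.associatedPrimes.minimalPrimes_annihilator_subset_associatedPrimes R R ?_
      have : Module.annihilator R R = ⊥ := Module.annihilator_eq_bot.2 inferInstance
      rw [this]; exact hp
    rw [AssociatedPrimes.mem_iff, isAssociatedPrime_iff_exists_injective_linearMap] at hass
    obtain ⟨-, f, hf⟩ := hass
    exact not_extVan_zero_of_embedding hC.faithful hpp.ne_top f hf h0
  rw [hht] at hi
  exact hall _ i (Nat.pos_of_ne_zero (by exact_mod_cast hi))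

/-- If `C` is semidualizing over a local ring and `Ext^i(k, C)` vanishes eventually, then it
vanishes for every `i` except the dimension of the ring. -/
lemma local_vanishing [IsNoetherianRing R] [IsLocalRing R] {C : Type u}
    [AddCommGroup C] [Module R C] (hC : SD R C)
    (hn : ∃ n, ∀ i, n ≤ i → ExtVan R (R ⧸ IsLocalRing.maximalIdeal R) C i)
    (i : ℕ) (hi : (i : ℕ∞) ≠ (IsLocalRing.maximalIdeal R).height) :
    ExtVan R (R ⧸ IsLocalRing.maximalIdeal R) C i := by
  have aux : ∀ (d : ℕ) (R : Type u) [CommRing R] [IsNoetherianRing R] [IsLocalRing R] (C : Type u)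
      [AddCommGroup C] [Module R C], SD R C → (IsLocalRing.maximalIdeal R).height = d →
      (∃ n, ∀ i, n ≤ i → ExtVan R (R ⧸ IsLocalRing.maximalIdeal R) C i) →
      ∀ i : ℕ, i ≠ d → ExtVan R (R ⧸ IsLocalRing.maximalIdeal R) C i := by
    intro d
    induction d with
    | zero =>
      intro R _ _ _ C _ _ hC hd hn i hi
      refine local_vanishing_depth_zero hC (fun x hx hreg => ?_) hn i (by rw [hd]; exact_mod_cast hi)
      have hd0 : (IsLocalRing.maximalIdeal R).height = 0 := by simpa using hd
      rw [Ideal.height_eq_zero_iff] at hd0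
      refine notMem_nonZeroDivisors_of_mem_mem_minimalPrimes hx hd0 ?_
      rw [mem_nonZeroDivisors_iff_right]
      exact fun z hz => hreg (by simpa [mul_comm] using hz)
    | succ d ih =>
      intro R _ _ _ C _ _ hC hd hn i hi
      by_cases hreg : ∃ x ∈ IsLocalRing.maximalIdeal R, IsSMulRegular R x
      · obtain ⟨x, hxm, hx⟩ := hreg
        have hne : Ideal.span {x} ≠ ⊤ := fun h =>
          (IsLocalRing.maximalIdeal.isMaximal R).ne_top (top_le_iff.1
            (h ▸ (Ideal.span_singleton_le_iff_mem _).2 hxm))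
        have : Nontrivial (R ⧸ Ideal.span {x}) := Ideal.Quotient.nontrivial_iff.2 hne
        have : IsLocalRing (R ⧸ Ideal.span {x}) :=
          IsLocalRing.of_surjective' (Ideal.Quotient.mk _) Ideal.Quotient.mk_surjective
        have hcomap : (IsLocalRing.maximalIdeal (R ⧸ Ideal.span {x})).comap
            (Ideal.Quotient.mk (Ideal.span {x})) = IsLocalRing.maximalIdeal R :=
          IsLocalRing.eq_maximalIdeal
            (Ideal.comap_isMaximal_of_surjective _ Ideal.Quotient.mk_surjective)
        have hht := height_quot hx (IsLocalRing.maximalIdeal (R ⧸ Ideal.span {x}))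
        rw [hcomap, hd] at hht
        have hrees : ∀ j, ExtVan R (R ⧸ IsLocalRing.maximalIdeal R) C (j + 1) ↔ _ := fun j =>
          hcomap ▸ rees_quot hx (hC.regular hx) (IsLocalRing.maximalIdeal (R ⧸ Ideal.span {x})) j
        rcases i with _ | i
        · exact extVan_zero_of_regular hxm (hC.regular hx)
        · rw [hrees]
          refine ih _ _ (hC.quot hx) ?_ ?_ i (by omega)
          · push_cast at hht
            exact ENat.add_left_injective_of_ne_top ENat.one_ne_top hht
          · obtain ⟨n, hn⟩ := hn
            exact ⟨n, fun j hj => (hrees j).1 (hn (j + 1) (by omega))⟩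
      · push Not at hreg
        exact local_vanishing_depth_zero hC hreg hn i (by rw [hd]; exact_mod_cast hi)
  obtain ⟨d, hd⟩ := ENat.ne_top_iff_exists.1 (Ideal.height_ne_top (I := IsLocalRing.maximalIdeal R)
    (IsLocalRing.maximalIdeal.isMaximal R).ne_top)
  rw [← hd] at hi
  exact aux d R C hC hd.symm hn i (by exact_mod_cast hi)

end

/-! ### The Bass condition and pointwise dualizing modules -/

section
variable {R : Type u} [CommRing R]

variable (R) in
/-- The vanishing of Bass numbers `μ^i(p, X) = 0` for `i ≠ ht p`, with `Ext` over `R_p` replaced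
by `Ext` over `R` by flat base change. -/
def BassCond (X : Type u) [AddCommGroup X] [Module R X] : Prop :=
  ∀ (p : Ideal R) [p.IsPrime] (i : ℕ), (i : ℕ∞) ≠ p.height →
    ExtVan R (R ⧸ p) (Localization.AtPrime p ⊗[R] X) i

variable {X X' : Type u} [AddCommGroup X] [Module R X] [AddCommGroup X'] [Module R X']

/-- Localization at `p` takes `R/p` to the residue field, so flat base change identifies the two
`Ext` groups. -/
lemma extVan_residue_iff (p : Ideal R) [p.IsPrime] {Y : Type u} [AddCommGroup Y] [Module R Y]
    [Module (Localization.AtPrime p) Y] [IsScalarTower R (Localization.AtPrime p) Y] (i : ℕ) :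
    ExtVan R (R ⧸ p) Y i ↔ ExtVan (Localization.AtPrime p)
      (Localization.AtPrime p ⧸ IsLocalRing.maximalIdeal (Localization.AtPrime p)) Y i := by
  rw [extVan_baseChange_flat (Localization.AtPrime p) (R ⧸ p) i]
  let e : (Localization.AtPrime p ⧸ IsLocalRing.maximalIdeal (Localization.AtPrime p))
      ≃ₗ[Localization.AtPrime p] Localization.AtPrime p ⊗[R] (R ⧸ p) :=
    (Submodule.quotEquivOfEq _ _ Localization.AtPrime.map_eq_maximalIdeal.symm).trans
      (Ideal.qoutMapEquivTensorQout (Localization.AtPrime p) (I := p))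
  exact ⟨fun h => h.of_equiv e.symm (.refl _ _), fun h => h.of_equiv e (.refl _ _)⟩

lemma mLength_eq_zero_iff (S : Type u) [CommRing S] (M : Type u) [AddCommGroup M] [Module S M] :
    mLength S M = 0 ↔ Subsingleton M := by
  rw [mLength, Order.height_eq_zero, isMin_iff_eq_bot, eq_comm]
  exact subsingleton_iff_bot_eq_top.trans (Submodule.subsingleton_iff S)

lemma bassNumber_eq_zero_iff (p : Ideal R) [p.IsPrime] (i : ℕ) :
    bassNumber R p i X = 0 ↔ ExtVan R (R ⧸ p) (Localization.AtPrime p ⊗[R] X) i := by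
  rw [bassNumber, mLength_eq_zero_iff, subsingleton_extM_iff, extVan_residue_iff]
  let e := LocalizedModule.equivTensorProduct p.primeCompl X
  exact ⟨fun h => h.of_equiv (.refl _ _) e, fun h => h.of_equiv (.refl _ _) e.symm⟩

lemma bassCond_iff : BassCond R X ↔ ∀ (p : Ideal R) [p.IsPrime], ∀ i : ℕ,
    (i : ℕ∞) ≠ primeHeight R p → bassNumber R p i X = 0 := by
  refine forall_congr' fun p => forall_congr' fun hp => forall_congr' fun i => ?_
  rw [bassNumber_eq_zero_iff]
  have : p.height = primeHeight R p := PrimeSpectrum.height_eq_orderHeight ⟨p, hp⟩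
  rw [this]

lemma BassCond.equiv (e : X ≃ₗ[R] X') (h : BassCond R X) : BassCond R X' := fun p _ i hi =>
  (h p i hi).of_equiv (.refl _ _) (TensorProduct.congr (.refl _ _) e)

lemma BassCond.flat_tensor [IsNoetherianRing R] (F : Type u) [AddCommGroup F] [Module R F]
    [Module.Flat R F] (h : BassCond R X) : BassCond R (F ⊗[R] X) := fun p _ i hi =>
  (ExtVan.flat_tensor F (h p i hi)).of_equiv (.refl _ _) (TensorProduct.leftComm R _ _ _)

lemma height_maximalIdeal (p : Ideal R) [p.IsPrime] :
    (IsLocalRing.maximalIdeal (Localization.AtPrime p)).height = p.height := by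
  rw [← IsLocalization.height_under p.primeCompl, Localization.AtPrime.under_maximalIdeal]

/-- Localizing at `p` absorbs a localization at a larger prime `m`. -/
lemma exists_localization_absorb {p m : Ideal R} [p.IsPrime] [m.IsPrime] (h : p ≤ m) :
    Nonempty ((Localization.AtPrime m ⊗[R] Localization.AtPrime p) ≃ₗ[R] Localization.AtPrime p) := by
  have : IsLocalizedModule m.primeCompl (LinearMap.id : Localization.AtPrime p →ₗ[R] _) := by
    refine ⟨fun s => ?_, fun y => ⟨(y, 1), by simp⟩, fun h => ⟨1, by simpa using h⟩⟩
    have hu : IsUnit (algebraMap R (Localization.AtPrime p) s) :=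
      IsLocalization.map_units (M := p.primeCompl) _ ⟨s, fun hs => s.2 (h hs)⟩
    rw [Module.End.isUnit_iff]
    obtain ⟨u, hu⟩ := hu
    refine ⟨fun a b hab => ?_, fun a => ⟨(↑u⁻¹ : Localization.AtPrime p) * a, ?_⟩⟩
    · have h1 : (s : R) • a = (s : R) • b := hab
      rw [Algebra.smul_def, Algebra.smul_def, ← hu] at h1
      exact u.mul_right_inj.1 h1
    · change (s : R) • _ = a
      rw [Algebra.smul_def, ← hu]
      exact u.mul_inv_cancel_left a
  exact ⟨((LocalizedModule.equivTensorProduct m.primeCompl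
    (Localization.AtPrime p)).restrictScalars R).symm.trans
      (IsLocalizedModule.iso m.primeCompl LinearMap.id)⟩

lemma exists_bound_of_injDim_lt {S : Type u} [CommRing S] {Y : Type u} [AddCommGroup Y] [Module S Y]
    (h : injDim S Y < ⊤) : ∃ n : ℕ, ∀ (N : Type u) [AddCommGroup N] [Module S N] (i : ℕ),
      n < i → ExtVan S N Y i := by
  rw [injDim, sInf_lt_iff] at h
  obtain ⟨n, hn, hlt⟩ := h
  obtain ⟨n, rfl⟩ := ENat.ne_top_iff_exists.1 hlt.ne
  exact ⟨n, fun N _ _ i hi => (subsingleton_extM_iff _ _ _ _).1 (hn N _ _ i (by exact_mod_cast hi))⟩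

/-- A pointwise dualizing module satisfies the Bass number condition. -/
lemma bassCond_of_pointwise [IsNoetherianRing R] {C : Type u} [AddCommGroup C] [Module R C]
    (h : IsPointwiseDualizing R C) : BassCond R C := by
  intro p _ i hi
  have hC := (sd_iff C).1 h.1
  obtain ⟨m, hm, hpm⟩ := Ideal.exists_le_maximal p (Ideal.IsPrime.ne_top inferInstance)
  obtain ⟨n, hn⟩ := exists_bound_of_injDim_lt (h.2 m hm).2
  obtain ⟨e⟩ := exists_localization_absorb hpm
  have hp : ∀ i, n < i → ExtVan R (R ⧸ p) (Localization.AtPrime p ⊗[R] C) i := by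
    intro i hi
    have h1 : ExtVan R (R ⧸ p) (Localization.AtPrime m ⊗[R] C) i := by
      rw [extVan_baseChange_flat (Localization.AtPrime m)]
      exact (hn _ i hi).of_equiv (.refl _ _) (LocalizedModule.equivTensorProduct m.primeCompl C)
    refine (ExtVan.flat_tensor (Localization.AtPrime p) h1).of_equiv (.refl _ _) ?_
    exact (TensorProduct.leftComm R _ _ _).trans ((TensorProduct.assoc R _ _ _).symm.trans
      (TensorProduct.congr e (.refl _ _)))
  rw [extVan_residue_iff]
  refine local_vanishing (hC.baseChange_flat (Localization.AtPrime p)) ⟨n + 1, fun j hj => ?_⟩ i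
    (by rwa [height_maximalIdeal])
  rw [← extVan_residue_iff]
  exact hp j hj

lemma extVan_inj (N Y : Type u) [AddCommGroup N] [Module R N] [AddCommGroup Y] [Module R Y]
    [Module.Injective R Y] (i : ℕ) : ExtVan R N Y (i + 1) := by
  have : Injective (ModuleCat.of R Y) := Module.injective_object_of_injective_module R Y
  exact subsingleton_of_forall_eq 0 fun e => Ext.eq_zero_of_injective e

/-- Vanishing of `Ext` against finite modules beyond a bound gives the same vanishing against all
modules. -/
lemma extVan_of_finite {n : ℕ} {Y : Type u} [AddCommGroup Y] [Module R Y]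
    (h : ∀ (Z : Type u) [AddCommGroup Z] [Module R Z] [Module.Finite R Z] (i : ℕ), n < i →
      ExtVan R Z Y i) (N : Type u) [AddCommGroup N] [Module R N] (i : ℕ) (hi : n < i) :
    ExtVan R N Y i := by
  induction n generalizing Y i with
  | zero =>
    have hB : Module.Baer R Y := by
      intro I φ
      obtain ⟨ψ, hψ⟩ := (extVan_one I.injective_subtype I.mkQ_surjective
        (LinearMap.exact_subtype_mkQ I)).1 (h (R ⧸ I) 1 one_pos) φ
      exact ⟨ψ, fun x hx => LinearMap.congr_fun hψ ⟨x, hx⟩⟩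
    have := hB.injective
    obtain ⟨i, rfl⟩ := Nat.exists_eq_succ_of_ne_zero hi.ne'
    exact extVan_inj N Y i
  | succ n ih =>
    obtain ⟨E, _, _, _, f, hf⟩ : ∃ (E : Type u) (_ : AddCommGroup E) (_ : Module R E)
        (_ : Module.Injective R E) (f : Y →ₗ[R] E), Function.Injective f := by
      let E := Injective.under (ModuleCat.of R Y)
      have : Injective (ModuleCat.of R E) := inferInstanceAs (Injective E)
      exact ⟨E, inferInstance, inferInstance, Module.injective_module_of_injective_object R E,
        (Injective.ι (ModuleCat.of R Y)).hom,
        (ModuleCat.mono_iff_injective _).1 inferInstance⟩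
    obtain ⟨i, rfl⟩ := Nat.exists_eq_succ_of_ne_zero (Nat.ne_zero_of_lt hi)
    have hg := (LinearMap.range f).mkQ_surjective
    have hex := LinearMap.exact_map_mkQ_range f
    have h' : ∀ (Z : Type u) [AddCommGroup Z] [Module R Z] [Module.Finite R Z] (i : ℕ), n < i →
        ExtVan R Z (E ⧸ LinearMap.range f) i := by
      intro Z _ _ _ i hi
      obtain ⟨i, rfl⟩ := Nat.exists_eq_succ_of_ne_zero (Nat.ne_zero_of_lt hi)
      exact ExtVan.cov₃ hf hg hex (extVan_inj Z E i) (h Z _ (by omega))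
    exact ExtVan.cov₁ hf hg hex (ih h' i (by omega)) (extVan_inj N E i)

/-- The vanishing of `Ext^i(k(m), C_m)` for `i > ht m` passes to all finitely generated modules over
`R_m`, and then to all modules by shifting along embeddings into injective modules; so the injective
dimension of `C_m` is at most `ht m`. -/
lemma pointwise_of_bassCond [IsNoetherianRing R] {C : Type u} [AddCommGroup C] [Module R C]
    (hC : SD R C) (h : BassCond R C) : IsPointwiseDualizing R C := by
  have := hC.fin
  refine ⟨(sd_iff C).2 hC, fun m _ _ => ?_⟩
  let e := LocalizedModule.equivTensorProduct m.primeCompl C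
  refine ⟨(sd_iff _).2 ((hC.baseChange_flat (Localization.AtPrime m)).equiv e.symm), ?_⟩
  obtain ⟨n, hn⟩ := ENat.ne_top_iff_exists.1 (Ideal.height_ne_top (I := m)
    (Ideal.IsPrime.ne_top inferInstance))
  refine lt_of_le_of_lt (b := (n : ℕ∞)) (sInf_le ?_) (ENat.natCast_lt_top n)
  intro N _ _ i hi
  have hi : n < i := by exact_mod_cast hi
  rw [subsingleton_extM_iff]
  refine ExtVan.of_equiv (.refl _ N) e.symm ?_
  refine extVan_of_finite (fun Z _ _ _ i hi => ?_) N i hi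
  refine extVan_of_residue (n := n) (fun j hj => ?_) Z i hi
  rw [← extVan_residue_iff]
  refine h m j ?_
  rw [← hn]
  exact_mod_cast hj.ne'

end

/-! ### Dimension zero -/

section
variable {R : Type u} [CommRing R]

/-- If `Ext¹(Z, N) = 0`, maps into `N` extend along the injection `K → P` with cokernel `Z`. -/
lemma ExtVan.extend {K P Z N : Type u} [AddCommGroup K] [Module R K] [AddCommGroup P] [Module R P]
    [AddCommGroup Z] [Module R Z] [AddCommGroup N] [Module R N]
    {f : K →ₗ[R] P} {g : P →ₗ[R] Z}
    (hf : Function.Injective f) (hg : Function.Surjective g) (h : Function.Exact f g)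
    (hN : ExtVan R Z N 1) (φ : K →ₗ[R] N) : ∃ ψ : P →ₗ[R] N, ψ ∘ₗ f = φ := by
  have hN' : Subsingleton (Ext (ModuleCat.of R Z) (ModuleCat.of R N) 1) := hN
  obtain ⟨y, hy⟩ := Ext.contravariant_sequence_exact₁ (shortExact hf hg h) _
    (Ext.mk₀ (ModuleCat.ofHom φ)) (add_zero 1) (Subsingleton.elim _ _)
  obtain ⟨ψ, rfl⟩ := Ext.homEquiv₀.symm.surjective y
  refine ⟨ψ.hom, ?_⟩
  rw [Ext.homEquiv₀_symm_apply, Ext.mk₀_comp_mk₀] at hy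
  have := Ext.homEquiv₀.symm.injective hy
  exact congrArg ModuleCat.Hom.hom this

lemma ExtVan.extend_of_injective {K P N : Type u} [AddCommGroup K] [Module R K] [AddCommGroup P]
    [Module R P] [Module.Finite R P] [AddCommGroup N] [Module R N]
    (hN : ∀ (Z : Type u) [AddCommGroup Z] [Module R Z] [Module.Finite R Z], ExtVan R Z N 1)
    {f : K →ₗ[R] P} (hf : Function.Injective f) (φ : K →ₗ[R] N) :
    ∃ ψ : P →ₗ[R] N, ψ ∘ₗ f = φ :=
  ExtVan.extend hf (Submodule.mkQ_surjective (LinearMap.range f)) (LinearMap.exact_map_mkQ_range f)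
    (hN _) φ

variable (Z C X : Type u) [AddCommGroup Z] [Module R Z] [AddCommGroup C] [Module R C]
  [AddCommGroup X] [Module R X]

/-- The Hom-evaluation morphism `Z ⊗ Hom(C, X) → Hom(Hom(Z, C), X)`, `z ⊗ ψ ↦ (h ↦ ψ (h z))`. -/
def ev : Z ⊗[R] (C →ₗ[R] X) →ₗ[R] ((Z →ₗ[R] C) →ₗ[R] X) :=
  TensorProduct.lift (LinearMap.mk₂ R (fun z ψ => ψ ∘ₗ LinearMap.applyₗ z)
    (fun z z' ψ => by ext h; simp) (fun r z ψ => by ext h; simp)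
    (fun z ψ ψ' => by ext h; simp) (fun r z ψ => by ext h; simp))

variable {Z C X}

@[simp] lemma ev_tmul (z : Z) (ψ : C →ₗ[R] X) (h : Z →ₗ[R] C) :
    ev Z C X (z ⊗ₜ ψ) h = ψ (h z) := rfl

lemma ev_natural {Z' : Type u} [AddCommGroup Z'] [Module R Z'] (g : Z →ₗ[R] Z')
    (t : Z ⊗[R] (C →ₗ[R] X)) (h : Z' →ₗ[R] C) :
    ev Z' C X (g.rTensor _ t) h = ev Z C X t (h ∘ₗ g) := by
  induction t with
  | zero => simp
  | tmul z ψ => simp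
  | add a b ha hb => simp [ha, hb]

variable (C) in
/-- The homomorphism `R^n → C` which is `c` on the `i`-th coordinate. -/
def coordHom {n : ℕ} (i : Fin n) (c : C) : (Fin n → R) →ₗ[R] C :=
  LinearMap.toSpanSingleton R C c ∘ₗ LinearMap.proj i

/-- For `Z = R^n` both sides of the evaluation map are `Hom(C, X)^n`. -/
lemma ev_free_bijective (n : ℕ) : Function.Bijective (ev (R := R) (Fin n → R) C X) := by
  have key : ∀ t : (Fin n → R) ⊗[R] (C →ₗ[R] X), ∃ ψ : Fin n → (C →ₗ[R] X),
      t = ∑ i, (Pi.single i (1 : R) : Fin n → R) ⊗ₜ[R] ψ i := by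
    intro t
    induction t with
    | zero => exact ⟨0, by simp⟩
    | tmul v ψ =>
      refine ⟨fun i => v i • ψ, ?_⟩
      simp_rw [← TensorProduct.smul_tmul, ← TensorProduct.sum_tmul]
      congr 1
      exact pi_eq_sum_univ' v
    | add a b ha hb =>
      obtain ⟨ψ, rfl⟩ := ha
      obtain ⟨ψ', rfl⟩ := hb
      exact ⟨ψ + ψ', by simp [TensorProduct.tmul_add, Finset.sum_add_distrib]⟩
  have key2 : ∀ (ψ : Fin n → (C →ₗ[R] X)) (h : (Fin n → R) →ₗ[R] C),
      ev (Fin n → R) C X (∑ i, (Pi.single i (1 : R) : Fin n → R) ⊗ₜ[R] ψ i) h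
        = ∑ i, ψ i (h (Pi.single i 1)) := by
    intro ψ h
    simp
  constructor
  · rw [injective_iff_map_eq_zero]
    intro t ht
    obtain ⟨ψ, rfl⟩ := key t
    have : ψ = 0 := by
      funext i
      ext c
      have := LinearMap.congr_fun ht (coordHom C i c)
      rw [key2] at this
      rw [Finset.sum_eq_single i] at this
      · simpa [coordHom] using this
      · intro j _ hj
        simp [coordHom, Pi.single_eq_of_ne hj.symm]
      · simp
    simp [this]
  · intro θ
    refine ⟨∑ i, (Pi.single i (1 : R) : Fin n → R) ⊗ₜ[R]
      (θ ∘ₗ { toFun := coordHom C i, map_add' := fun a b => by ext; simp [coordHom],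
              map_smul' := fun r a => by ext; simp [coordHom, smul_comm r] }), ?_⟩
    ext h
    rw [key2]
    simp only [LinearMap.comp_apply, LinearMap.coe_mk, AddHom.coe_mk]
    rw [← map_sum]
    congr 1
    refine LinearMap.pi_ext' fun i => ?_
    ext
    simp only [LinearMap.comp_apply, LinearMap.sum_apply, LinearMap.coe_single]
    rw [Finset.sum_eq_single i]
    · simp [coordHom]
    · intro j _ hj
      simp [coordHom, Pi.single_eq_of_ne hj]
    · simp

lemma factor_of_surjective {A B D : Type u} [AddCommGroup A] [Module R A] [AddCommGroup B]
    [Module R B] [AddCommGroup D] [Module R D] {g : A →ₗ[R] B} (hg : Function.Surjective g)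
    {h : A →ₗ[R] D} (hle : LinearMap.ker g ≤ LinearMap.ker h) :
    ∃ h' : B →ₗ[R] D, h' ∘ₗ g = h := by
  refine ⟨(LinearMap.ker g).liftQ h hle ∘ₗ
      (g.quotKerEquivOfSurjective hg).symm.toLinearMap, ?_⟩
  ext v
  have : (g.quotKerEquivOfSurjective hg).symm (g v) = Submodule.Quotient.mk v := by
    rw [LinearEquiv.symm_apply_eq, LinearMap.quotKerEquivOfSurjective_apply_mk]
  simp [this]

variable [Module.Finite R C]
  (hC : ∀ (Z : Type u) [AddCommGroup Z] [Module R Z] [Module.Finite R Z], ExtVan R Z C 1)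
  (hX : ∀ (Z : Type u) [AddCommGroup Z] [Module R Z] [Module.Finite R Z], ExtVan R Z X 1)

include hX in
variable (Z) in
lemma ev_surjective [Module.Finite R Z] : Function.Surjective (ev (R := R) Z C X) := by
  intro θ
  obtain ⟨n, K, g, hg, -⟩ := exists_finite_cover R Z
  have hinj : Function.Injective (LinearMap.lcomp R C g) := fun a b hab => by
    ext z
    obtain ⟨v, rfl⟩ := hg z
    exact LinearMap.congr_fun hab v
  obtain ⟨θ', hθ'⟩ := ExtVan.extend_of_injective hX hinj θ
  obtain ⟨t, ht⟩ := (ev_free_bijective n).2 θ'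
  refine ⟨g.rTensor _ t, ?_⟩
  ext h
  rw [ev_natural, ht, ← hθ']
  rfl

variable [IsNoetherianRing R]

include hC hX in
variable (Z) in
/-- Injectivity compares the evaluation map of `Z` with that of a finite free cover, using that
`Hom(-, C)` and `Hom(-, X)` are exact on finitely generated modules. -/
lemma ev_bijective [Module.Finite R Z] : Function.Bijective (ev (R := R) Z C X) := by
  refine ⟨?_, ev_surjective Z hX⟩
  rw [injective_iff_map_eq_zero]
  intro t ht
  obtain ⟨n, K, g, hg, hex⟩ := exists_finite_cover R Z
  obtain ⟨t', rfl⟩ := LinearMap.rTensor_surjective (C →ₗ[R] X) hg t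
  have hs : Function.Surjective (LinearMap.lcomp R C K.subtype) := fun φ =>
    ExtVan.extend_of_injective hC K.injective_subtype φ
  have hker : LinearMap.ker (LinearMap.lcomp R C K.subtype) ≤ LinearMap.ker (ev _ C X t') := by
    intro h hh
    have hle : LinearMap.ker g ≤ LinearMap.ker h := fun v hv => by
      obtain ⟨k, rfl⟩ := (hex v).1 hv
      exact LinearMap.congr_fun hh k
    obtain ⟨h', hh'⟩ := factor_of_surjective hg hle
    have := LinearMap.congr_fun ht h'
    rw [ev_natural, hh'] at this
    exact this
  obtain ⟨θ, hθ⟩ := factor_of_surjective hs hker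
  obtain ⟨s, hs⟩ := ev_surjective K hX θ
  have : t' = K.subtype.rTensor _ s := by
    apply (ev_free_bijective n).1
    ext1 h
    rw [ev_natural, hs, ← hθ]
    rfl
  rw [this, ← LinearMap.comp_apply, ← LinearMap.rTensor_comp,
    show g ∘ₗ K.subtype = 0 from hex.linearMap_comp_eq_zero]
  simp

include hC hX in
lemma rTensor_hom_injective {Z' : Type u} [AddCommGroup Z'] [Module R Z'] [Module.Finite R Z]
    [Module.Finite R Z'] (f : Z →ₗ[R] Z') (hf : Function.Injective f) :
    Function.Injective (f.rTensor (C →ₗ[R] X)) := by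
  rw [injective_iff_map_eq_zero]
  intro t ht
  apply (ev_bijective Z hC hX).1
  rw [map_zero]
  ext1 h
  obtain ⟨h', rfl⟩ := ExtVan.extend_of_injective hC hf h
  rw [← ev_natural, ht]
  simp

include hC hX in
/-- By `ev_bijective`, tensoring with `Hom(C, X)` is the exact functor `Hom(Hom(-, C), X)` on finitely
generated modules. -/
lemma flat_hom : Module.Flat R (C →ₗ[R] X) :=
  Module.Flat.iff_rTensor_injective.2 fun I _ =>
    rTensor_hom_injective hC hX I.subtype I.injective_subtype

include hC hX in
/-- The evaluation `C ⊗ Hom(C, X) → X` is the case `Z = C` of `ev`, because `Hom(C, C) = R`. -/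
lemma eval_bijective (hSD : SD R C) :
    Function.Bijective (TensorProduct.lift (LinearMap.id (R := R) (M := C →ₗ[R] X)).flip) := by
  have key : ∀ t, TensorProduct.lift (LinearMap.id (R := R) (M := C →ₗ[R] X)).flip t
      = ev C C X t LinearMap.id := by
    intro t
    induction t with
    | zero => simp
    | tmul c ψ => simp
    | add a b ha hb => simp [ha, hb]
  constructor
  · rw [injective_iff_map_eq_zero]
    intro t ht
    apply (ev_bijective C hC hX).1
    rw [map_zero]
    ext1 h
    obtain ⟨r, hr⟩ := hSD.endo h
    have : h = r • LinearMap.id := by ext c; simp [hr]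
    rw [this, map_smul, ← key, ht]
    simp
  · intro x
    let e : R →ₗ[R] (C →ₗ[R] C) := LinearMap.toSpanSingleton R _ LinearMap.id
    have he : Function.Bijective e := by
      refine ⟨?_, fun h => ?_⟩
      · rw [injective_iff_map_eq_zero]
        exact fun r hr => hSD.faithful r fun c => by simpa [e] using LinearMap.congr_fun hr c
      · obtain ⟨r, hr⟩ := hSD.endo h
        exact ⟨r, by ext c; simp [e, hr]⟩
    obtain ⟨t, ht⟩ := (ev_bijective C hC hX).2
      (LinearMap.toSpanSingleton R X x ∘ₗ (LinearEquiv.ofBijective e he).symm.toLinearMap)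
    refine ⟨t, ?_⟩
    have h1 : (LinearEquiv.ofBijective e he).symm LinearMap.id = 1 := by
      rw [LinearEquiv.symm_apply_eq]
      simp [e]
    rw [key, ht]
    simp [h1]

end

section
variable {R : Type u} [CommRing R]

/-- A finitely generated faithful module over a Noetherian ring detects zero modules under `⊗`,
with no finiteness on the other factor. -/
lemma subsingleton_of_tensor [IsNoetherianRing R] {C Q : Type u} [AddCommGroup C] [Module R C]
    [Module.Finite R C] [AddCommGroup Q] [Module R Q]
    (hf : ∀ r : R, (∀ c : C, r • c = 0) → r = 0) (h : Subsingleton (C ⊗[R] Q)) :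
    Subsingleton Q := by
  by_contra hQ
  rw [not_subsingleton_iff_nontrivial] at hQ
  obtain ⟨q, hq⟩ := exists_ne (0 : Q)
  obtain ⟨χ, hχ⟩ := CharacterModule.exists_character_apply_ne_zero_of_ne_zero hq
  have : Nontrivial (CharacterModule Q) := ⟨χ, 0, fun h => hχ (by rw [h]; rfl)⟩
  obtain ⟨p, hp⟩ := associatedPrimes.nonempty R (CharacterModule Q)
  have hpp : p.IsPrime := hp.isPrime
  obtain ⟨j, hj⟩ := (isAssociatedPrime_iff_exists_injective_linearMap p (CharacterModule Q)).1 hp |>.2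
  obtain ⟨φ, hφ⟩ := exists_nonzero_hom hf p
  refine hφ ?_
  ext1 c
  apply hj
  rw [LinearMap.zero_apply, map_zero]
  ext q
  have : (CharacterModule.uncurry (R := R) (j ∘ₗ φ)) (c ⊗ₜ q) = 0 := by
    rw [Subsingleton.elim (c ⊗ₜ[R] q) 0, map_zero]
  exact this

/-- The vanishing of `Tor₁(C, N)` for flat `N`, as an explicit diagram chase on a free cover of `C`. -/
lemma lTensor_injective_of_flat_quotient {K M N : Type u} [AddCommGroup K] [Module R K]
    [AddCommGroup M] [Module R M] [AddCommGroup N] [Module R N] [Module.Flat R N]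
    (C : Type u) [AddCommGroup C] [Module R C]
    {j : K →ₗ[R] M} {g : M →ₗ[R] N} (hj : Function.Injective j) (hg : Function.Surjective g)
    (h : Function.Exact j g) : Function.Injective (j.lTensor C) := by
  obtain ⟨F, _, _, _, S, q, hq, hex⟩ := exists_free_cover R C
  have hsq {A B : Type u} [AddCommGroup A] [Module R A] [AddCommGroup B] [Module R B]
      {A' B' : Type u} [AddCommGroup A'] [Module R A'] [AddCommGroup B'] [Module R B']
      (f : A →ₗ[R] A') (u : B →ₗ[R] B') (t : A ⊗[R] B) :
      f.rTensor B' (u.lTensor A t) = u.lTensor A' (f.rTensor B t) := by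
    rw [← LinearMap.comp_apply, ← LinearMap.comp_apply, LinearMap.rTensor_comp_lTensor,
      LinearMap.lTensor_comp_rTensor]
  rw [injective_iff_map_eq_zero]
  intro k hk
  obtain ⟨k', rfl⟩ := LinearMap.rTensor_surjective K hq k
  rw [← hsq] at hk
  obtain ⟨s, hs⟩ := (rTensor_exact M hex hq _).1 hk
  have hs0 : g.lTensor S s = 0 := by
    apply Module.Flat.rTensor_preserves_injective_linearMap (M := N) S.subtype S.injective_subtype
    rw [hsq, hs, ← LinearMap.comp_apply, ← LinearMap.lTensor_comp, h.linearMap_comp_eq_zero]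
    simp
  obtain ⟨s', rfl⟩ := (lTensor_exact S h hg _).1 hs0
  rw [hsq] at hs
  have := Module.Flat.lTensor_preserves_injective_linearMap (M := F) j hj hs
  rw [← this, ← LinearMap.comp_apply, ← LinearMap.rTensor_comp, hex.linearMap_comp_eq_zero]
  simp

/-- A map to a flat module is bijective as soon as it is so after tensoring with a finitely
generated faithful module. -/
lemma bijective_of_lTensor [IsNoetherianRing R] {C M N : Type u} [AddCommGroup C] [Module R C]
    [Module.Finite R C] [AddCommGroup M] [Module R M] [AddCommGroup N] [Module R N]
    [Module.Flat R N] (hf : ∀ r : R, (∀ c : C, r • c = 0) → r = 0) (g : M →ₗ[R] N)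
    (hg : Function.Bijective (g.lTensor C)) : Function.Bijective g := by
  have hsurj : Function.Surjective g := by
    have : Subsingleton (N ⧸ LinearMap.range g) := by
      refine subsingleton_of_tensor (C := C) hf ⟨fun a b => ?_⟩
      have key : ∀ a : C ⊗[R] (N ⧸ LinearMap.range g), a = 0 := by
        intro a
        obtain ⟨a, rfl⟩ := LinearMap.lTensor_surjective C
          (Submodule.mkQ_surjective (LinearMap.range g)) a
        obtain ⟨a, rfl⟩ := hg.2 a
        rw [← LinearMap.comp_apply, ← LinearMap.lTensor_comp,
          (LinearMap.exact_map_mkQ_range g).linearMap_comp_eq_zero]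
        simp
      rw [key a, key b]
    rw [← LinearMap.range_eq_top]
    exact Submodule.Quotient.subsingleton_iff.1 this
  refine ⟨?_, hsurj⟩
  rw [← LinearMap.ker_eq_bot, ← Submodule.subsingleton_iff_eq_bot]
  refine subsingleton_of_tensor (C := C) hf ⟨fun a b => ?_⟩
  apply lTensor_injective_of_flat_quotient C (LinearMap.ker g).injective_subtype hsurj
    (LinearMap.exact_subtype_ker_map g)
  apply hg.1
  simp only [← LinearMap.comp_apply, ← LinearMap.lTensor_comp,
    (LinearMap.exact_subtype_ker_map g).linearMap_comp_eq_zero]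
  simp

variable (C M : Type u) [AddCommGroup C] [Module R C] [AddCommGroup M] [Module R M]

/-- The unit `M → Hom(C, C ⊗ M)` of the tensor-hom adjunction. -/
def unitHom : M →ₗ[R] (C →ₗ[R] C ⊗[R] M) := (TensorProduct.mk R C M).flip

variable {C M}

/-- The triangle identity of the tensor-hom adjunction. -/
lemma eval_comp_unit (t : C ⊗[R] M) :
    TensorProduct.lift (LinearMap.id (R := R) (M := C →ₗ[R] C ⊗[R] M)).flip
      ((unitHom C M).lTensor C t) = t := by
  induction t with
  | zero => simp
  | tmul c m => simp [unitHom]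
  | add a b ha hb => rw [map_add, map_add, ha, hb]

/-- If `C` and `C ⊗ M` behave like injective modules with respect to finitely generated modules,
then `M ≅ Hom(C, C ⊗ M)` is flat. -/
lemma flat_of_extVan_one [IsNoetherianRing R] (hSD : SD R C)
    (hC : ∀ (Z : Type u) [AddCommGroup Z] [Module R Z] [Module.Finite R Z], ExtVan R Z C 1)
    (hX : ∀ (Z : Type u) [AddCommGroup Z] [Module R Z] [Module.Finite R Z],
      ExtVan R Z (C ⊗[R] M) 1) : Module.Flat R M := by
  have := hSD.fin
  have hev := eval_bijective hC hX hSD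
  have : Module.Flat R (C →ₗ[R] C ⊗[R] M) := flat_hom hC hX
  have hu : Function.Bijective ((unitHom (R := R) C M).lTensor C) := by
    refine ⟨fun a b hab => ?_, fun y => ⟨_, hev.1 (eval_comp_unit (R := R) _)⟩⟩
    rw [← eval_comp_unit (R := R) a, hab, eval_comp_unit]
  exact Module.Flat.of_linearEquiv
    (LinearEquiv.ofBijective _ (bijective_of_lTensor hSD.faithful _ hu))

/-- Over a local ring of dimension zero the Bass condition forces flatness. -/
lemma flat_of_bassCond_local [IsNoetherianRing R] [IsLocalRing R]
    (h0 : (IsLocalRing.maximalIdeal R).height = 0) (hSD : SD R C)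
    (hC : ExtVan R (R ⧸ IsLocalRing.maximalIdeal R) C 1)
    (hX : ExtVan R (R ⧸ IsLocalRing.maximalIdeal R) (C ⊗[R] M) 1) : Module.Flat R M := by
  have hp : ∀ p : Ideal R, p.IsPrime → p = IsLocalRing.maximalIdeal R := by
    intro p hp
    have hle := IsLocalRing.le_maximalIdeal hp.ne_top
    have hmin := Ideal.height_eq_zero_iff.1 h0
    exact le_antisymm hle (hmin.2 ⟨hp, bot_le⟩ hle)
  refine flat_of_extVan_one hSD (fun Z _ _ _ => extVan_of_primes (fun p hpp => ?_) Z)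
    (fun Z _ _ _ => extVan_of_primes (fun p hpp => ?_) Z)
  · rw [hp p hpp]; exact hC
  · rw [hp p hpp]; exact hX

end

/-! ### Induction on regular elements -/

section
variable {R : Type u} [CommRing R] {X : Type u} [AddCommGroup X] [Module R X]

/-- Under the Bass condition, associated primes have height zero. -/
lemma BassCond.height_ass [IsNoetherianRing R] (h : BassCond R X) {p : Ideal R} (hp : p ∈ associatedPrimes R X) :
    p.height = 0 := by
  by_contra hne
  have hpp : p.IsPrime := hp.isPrime
  obtain ⟨j, hj⟩ := (isAssociatedPrime_iff_exists_injective_linearMap p X).1 hp |>.2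
  have h0 := h p 0 (by simpa using Ne.symm hne)
  rw [extVan_zero] at h0
  have h1 := LinearMap.congr_fun (h0 (TensorProduct.mk R (Localization.AtPrime p) X 1 ∘ₗ j)) 1
  obtain ⟨s, hs⟩ := (IsLocalizedModule.eq_zero_iff p.primeCompl
    (TensorProduct.mk R (Localization.AtPrime p) X 1)).1 h1
  have h2 : j ((s : R) • 1) = 0 := by rw [map_smul]; exact hs
  have h3 : (s : R) • (1 : R ⧸ p) = 0 := hj (by rw [h2, map_zero])
  refine s.2 (Ideal.Quotient.eq_zero_iff_mem.1 ?_)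
  rw [← h3, Algebra.smul_def, mul_one]; rfl

/-- The associated primes of `X` have height zero, and a minimal prime contains no regular element. -/
lemma BassCond.regular [IsNoetherianRing R] (h : BassCond R X) {x : R} (hx : IsSMulRegular R x) :
    IsSMulRegular X x := by
  refine isSMulRegular_of_ass fun p hp hxp => ?_
  have hpp : p.IsPrime := hp.isPrime
  have h0 := Ideal.height_eq_zero_iff.1 (h.height_ass hp)
  refine hx.notMem_of_mem_minimalPrimes ?_ hxp
  rw [Module.annihilator_eq_bot.2 inferInstance]
  exact h0

section
variable {x : R}

/-- The localization of `R/x` at `p'` as the base change of the localization of `R` at the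
contraction of `p'`. -/
lemma exists_localization_quot (p' : Ideal (R ⧸ Ideal.span {x})) [p'.IsPrime] :
    Nonempty (((R ⧸ Ideal.span {x}) ⊗[R]
      Localization.AtPrime (p'.comap (Ideal.Quotient.mk (Ideal.span {x}))))
        ≃ₗ[R ⧸ Ideal.span {x}] Localization.AtPrime p') := by
  set p := p'.comap (Ideal.Quotient.mk (Ideal.span {x}))
  have h : Algebra.algebraMapSubmonoid (R ⧸ Ideal.span {x}) p.primeCompl = p'.primeCompl := by
    ext a
    constructor
    · rintro ⟨r, hr, rfl⟩
      exact hr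
    · intro ha
      obtain ⟨r, rfl⟩ := Ideal.Quotient.mk_surjective a
      exact ⟨r, ha, rfl⟩
  have : IsLocalization p'.primeCompl
      ((R ⧸ Ideal.span {x}) ⊗[R] Localization.AtPrime p) := by
    rw [← h]
    exact IsLocalization.tensor _ p.primeCompl
  exact ⟨(IsLocalization.algEquiv p'.primeCompl _ _).toLinearEquiv⟩

/-- The Bass condition passes to the quotient by a regular element, by Rees' shift. -/
lemma BassCond.quot [IsNoetherianRing R] (h : BassCond R X) (hx : IsSMulRegular R x) :
    BassCond (R ⧸ Ideal.span {x}) ((R ⧸ Ideal.span {x}) ⊗[R] X) := by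
  intro p' _ i hi
  have h1 := h (p'.comap (Ideal.Quotient.mk (Ideal.span {x}))) (i + 1) (by
    rw [← height_quot hx p']
    intro hh
    apply hi
    push_cast at hh
    exact (ENat.add_left_injective_of_ne_top (by simp)) hh)
  rw [rees_quot hx ((h.regular hx).lTensor _)] at h1
  obtain ⟨e⟩ := exists_localization_quot p'
  exact h1.of_equiv (.refl _ _) ((TensorProduct.AlgebraTensorModule.distribBaseChange R _ _ _).trans
    (TensorProduct.congr e (.refl _ _)))

end

variable {C M : Type u} [AddCommGroup C] [Module R C] [AddCommGroup M] [Module R M]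

/-- If `C` satisfies the Bass condition then the associated primes of `R` have height zero. -/
lemma SD.height_ass [IsNoetherianRing R] (hC : SD R C) (h : BassCond R C) {q : Ideal R}
    (hq : q ∈ associatedPrimes R R) : q.height = 0 := by
  by_contra hne
  have hqp : q.IsPrime := hq.isPrime
  obtain ⟨j, hj⟩ := (isAssociatedPrime_iff_exists_injective_linearMap q R).1 hq |>.2
  have h0 := h q 0 (by simpa using Ne.symm hne)
  rw [extVan_zero] at h0
  have hs : algebraMap R (Localization.AtPrime q) (j 1) = 0 := by
    refine (hC.baseChange_flat (Localization.AtPrime q)).faithful _ fun t => ?_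
    have h1 := LinearMap.congr_fun (h0 ((LinearMap.toSpanSingleton R _ t) ∘ₗ j)) 1
    simpa using h1
  obtain ⟨s, hs⟩ := (IsLocalization.map_eq_zero_iff q.primeCompl _ _).1 hs
  have h2 : j ((s : R) • 1) = 0 := by rw [map_smul]; exact hs
  have h3 : (s : R) • (1 : R ⧸ q) = 0 := hj (by rw [h2, map_zero])
  refine s.2 (Ideal.Quotient.eq_zero_iff_mem.1 ?_)
  rw [← h3, Algebra.smul_def, mul_one]; rfl

/-- Flatness of `M` at the primes of height zero. -/
lemma flat_localization [IsNoetherianRing R] (hC : SD R C) (h : BassCond R C)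
    (hM : BassCond R (C ⊗[R] M)) {q : Ideal R} [q.IsPrime] (hq : q.height = 0) :
    Module.Flat (Localization.AtPrime q) (Localization.AtPrime q ⊗[R] M) := by
  have h1 : ((1 : ℕ) : ℕ∞) ≠ q.height := by rw [hq]; simp
  refine flat_of_bassCond_local (C := Localization.AtPrime q ⊗[R] C)
    (by rw [height_maximalIdeal, hq]) (hC.baseChange_flat _) ?_ ?_
  · rw [← extVan_residue_iff]
    exact h q 1 h1
  · refine ((extVan_residue_iff q 1).1 (hM q 1 h1)).of_equiv (.refl _ _) ?_
    exact TensorProduct.AlgebraTensorModule.distribBaseChange R _ _ _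

end

section
variable {R : Type u} [CommRing R] {M : Type u} [AddCommGroup M] [Module R M]

/-- If multiplication by `s` is injective on `R`, `I` and `M` and `M/sM` is flat over `R/s`, then
multiplication by `s` is injective on `I ⊗ M` because `Tor₁(I, M/sM) = 0`. -/
lemma isSMulRegular_tensor {s : R} {I : Type u} [AddCommGroup I] [Module R I]
    (hI : IsSMulRegular I s) (hM : IsSMulRegular M s)
    [Module.Flat (R ⧸ Ideal.span {s}) ((R ⧸ Ideal.span {s}) ⊗[R] M)] :
    IsSMulRegular (I ⊗[R] M) s := by
  obtain ⟨F, _, _, _, K, g, hg, hex⟩ := exists_free_cover R I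
  have hinj : Function.Injective ((K.subtype.rTensor M).baseChange (R ⧸ Ideal.span {s})) := by
    have hnat : ∀ u, (K.subtype.baseChange (R ⧸ Ideal.span {s})).rTensor
        ((R ⧸ Ideal.span {s}) ⊗[R] M)
        (TensorProduct.AlgebraTensorModule.distribBaseChange R (R ⧸ Ideal.span {s}) K M u) =
        TensorProduct.AlgebraTensorModule.distribBaseChange R (R ⧸ Ideal.span {s}) F M
          ((K.subtype.rTensor M).baseChange (R ⧸ Ideal.span {s}) u) := by
      intro u
      obtain ⟨u, rfl⟩ := exists_one_tmul u
      induction u with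
      | zero => simp
      | tmul k m => simp
      | add a b ha hb => simp only [TensorProduct.tmul_add, map_add, ha, hb]
    intro u v huv
    have h1 := Module.Flat.rTensor_preserves_injective_linearMap
      (M := (R ⧸ Ideal.span {s}) ⊗[R] M) _ (baseChange_injective_of_regular hex hI)
    apply (TensorProduct.AlgebraTensorModule.distribBaseChange R (R ⧸ Ideal.span {s}) K M).injective
    apply h1
    rw [hnat, hnat, huv]
  rw [isSMulRegular_iff_right_eq_zero_of_smul]
  intro y hy
  obtain ⟨y, rfl⟩ := LinearMap.rTensor_surjective M hg y
  rw [← map_smul] at hy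
  obtain ⟨k, hk⟩ := (rTensor_exact M hex hg _).1 hy
  have hk0 : (1 : R ⧸ Ideal.span {s}) ⊗ₜ[R] k = 0 := by
    apply hinj
    rw [LinearMap.baseChange_tmul, hk, map_zero, one_tmul_eq_zero_iff]
    exact ⟨y, rfl⟩
  obtain ⟨k', rfl⟩ := (one_tmul_eq_zero_iff k).1 hk0
  rw [map_smul] at hk
  have hF : IsSMulRegular (F ⊗[R] M) s := hM.lTensor F
  rw [← hF hk]
  exact (rTensor_exact M hex hg).apply_apply_eq_zero k'

/-- Flatness criterion: `M` is flat if it is flat at the associated primes of `R` and every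
regular element `s` is regular on `M` with `M/sM` flat over `R/s`. -/
lemma flat_of_quot [IsNoetherianRing R]
    (hreg : ∀ s : R, IsSMulRegular R s → IsSMulRegular M s)
    (hquot : ∀ s : R, IsSMulRegular R s →
      Module.Flat (R ⧸ Ideal.span {s}) ((R ⧸ Ideal.span {s}) ⊗[R] M))
    (hloc : ∀ (q : Ideal R) [q.IsPrime], q ∈ associatedPrimes R R →
      Module.Flat (Localization.AtPrime q) (Localization.AtPrime q ⊗[R] M)) :
    Module.Flat R M := by
  rw [Module.Flat.iff_rTensor_injective]
  intro I _
  rw [injective_iff_map_eq_zero]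
  intro t ht
  have hann : ∀ q ∈ associatedPrimes R R, ∃ s, s ∉ q ∧ s • t = 0 := by
    intro q hq
    have hqp : q.IsPrime := hq.isPrime
    have := hloc q hq
    have hflat : Module.Flat R (Localization.AtPrime q ⊗[R] M) :=
      Module.Flat.trans R (Localization.AtPrime q) _
    let mk := TensorProduct.mk R (Localization.AtPrime q) M 1
    have h0 : mk.lTensor I t = 0 := by
      apply Module.Flat.rTensor_preserves_injective_linearMap
        (M := Localization.AtPrime q ⊗[R] M) I.subtype I.injective_subtype
      rw [← LinearMap.comp_apply, LinearMap.rTensor_comp_lTensor, ← LinearMap.lTensor_comp_rTensor,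
        LinearMap.comp_apply, ht, map_zero, map_zero]
    have hcomm : ∀ t, TensorProduct.leftComm R I (Localization.AtPrime q) M (mk.lTensor I t) =
        1 ⊗ₜ t := by
      intro t
      induction t with
      | zero => simp
      | tmul a m => simp [mk]
      | add a b ha hb => rw [map_add, map_add, ha, hb, TensorProduct.tmul_add]
    have h1 : TensorProduct.mk R (Localization.AtPrime q) (I ⊗[R] M) 1 t = 0 := by
      rw [TensorProduct.mk_apply, ← hcomm, h0, map_zero]
    obtain ⟨s, hs⟩ := (IsLocalizedModule.eq_zero_iff q.primeCompl
      (TensorProduct.mk R (Localization.AtPrime q) (I ⊗[R] M) 1)).1 h1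
    exact ⟨s, s.2, hs⟩
  -- prime avoidance turns the local annihilators into one regular element killing `t`
  obtain ⟨s, hst, hs⟩ : ∃ s : R, s • t = 0 ∧ IsSMulRegular R s := by
    by_contra! hcon
    have hsub : ((LinearMap.ker (LinearMap.toSpanSingleton R (I ⊗[R] M) t) : Ideal R) : Set R) ⊆
        ⋃ q ∈ associatedPrimes R R, ((id q : Ideal R) : Set R) := by
      intro s hs
      by_contra hns
      refine hcon s hs (isSMulRegular_of_ass fun p hp hsp => hns ?_)
      exact Set.mem_biUnion hp hsp
    obtain ⟨q, hq, hle⟩ := (Ideal.subset_union_prime_finite (associatedPrimes.finite R R) 0 0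
      fun _ h _ _ => h.isPrime).1 hsub
    obtain ⟨s, hs, hst⟩ := hann q hq
    exact hs (hle hst)
  have := hquot s hs
  have hI : IsSMulRegular I s := fun a b hab => Subtype.ext (hs (congrArg Subtype.val hab))
  exact isSMulRegular_tensor hI (hreg s hs) (by simpa using hst)

end

section

/-- The image `M'` of `M → Hom(C, C ⊗ M)` has `C ⊗ M' ≅ C ⊗ M`, and elements regular on `C ⊗ M` are
regular on `M'`. -/
lemma exists_torsionfree_quotient {R : Type u} [CommRing R] (C M : Type u) [AddCommGroup C]
    [Module R C] [AddCommGroup M] [Module R M] :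
    ∃ (M' : Type u) (_ : AddCommGroup M') (_ : Module R M') (π : M →ₗ[R] M'),
      Function.Bijective (π.lTensor C) ∧
      ∀ s : R, IsSMulRegular (C ⊗[R] M) s → IsSMulRegular M' s := by
  refine ⟨LinearMap.range (unitHom (R := R) C M), inferInstance, inferInstance,
    (unitHom (R := R) C M).rangeRestrict, ⟨fun a b hab => ?_,
      LinearMap.lTensor_surjective C (LinearMap.surjective_rangeRestrict _)⟩, ?_⟩
  · have h1 := congrArg ((LinearMap.range (unitHom (R := R) C M)).subtype.lTensor C) hab
    rw [← LinearMap.comp_apply, ← LinearMap.comp_apply, ← LinearMap.lTensor_comp] at h1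
    rw [← eval_comp_unit (R := R) a, ← eval_comp_unit (R := R) b]
    exact congrArg _ h1
  · intro s hs a b hab
    refine Subtype.ext (LinearMap.ext fun c => hs ?_)
    exact LinearMap.congr_fun (congrArg Subtype.val hab) c

variable (R₀ : Type u) [CommRing R₀] [IsNoetherianRing R₀]

/-- The Bass condition on `C ⊗ M` forces `M` to be flat. The induction is on the kernel of a
surjection onto `R` from a fixed Noetherian ring. -/
theorem flat_of_bassCond_aux (J : Ideal R₀) : ∀ (R : Type u) [CommRing R] (f : R₀ →+* R),
    Function.Surjective f → RingHom.ker f = J → ∀ (C M : Type u) [AddCommGroup C] [Module R C]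
    [AddCommGroup M] [Module R M], SD R C → BassCond R C → BassCond R (C ⊗[R] M) →
    Module.Flat R M := by
  induction J using WellFoundedGT.induction with
  | ind J IH =>
  intro R _ f hf hJ C M _ _ _ _ hC hB hM
  have : IsNoetherianRing R := isNoetherianRing_of_surjective R₀ R f hf
  have := hC.fin
  have step : ∀ (N : Type u) [AddCommGroup N] [Module R N], BassCond R (C ⊗[R] N) →
      (∀ s : R, IsSMulRegular R s → IsSMulRegular N s) → Module.Flat R N := by
    intro N _ _ hN hreg
    rcases subsingleton_or_nontrivial R with hR | hR
    · have : Subsingleton N := Module.subsingleton R N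
      exact @Module.Flat.of_free R N _ _ _ (Module.Free.of_subsingleton' R N)
    refine flat_of_quot hreg (fun s hs => ?_) fun q _ hq =>
      flat_localization hC hB hN (hC.height_ass hB hq)
    have hN' : BassCond (R ⧸ Ideal.span {s})
        (((R ⧸ Ideal.span {s}) ⊗[R] C) ⊗[R ⧸ Ideal.span {s}] ((R ⧸ Ideal.span {s}) ⊗[R] N)) :=
      (hN.quot hs).equiv
      (TensorProduct.AlgebraTensorModule.distribBaseChange R (R ⧸ Ideal.span {s}) C N)
    refine IH (RingHom.ker ((Ideal.Quotient.mk (Ideal.span {s})).comp f)) ?_ (R ⧸ Ideal.span {s})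
      ((Ideal.Quotient.mk (Ideal.span {s})).comp f)
      (Ideal.Quotient.mk_surjective.comp hf) rfl ((R ⧸ Ideal.span {s}) ⊗[R] C)
      ((R ⧸ Ideal.span {s}) ⊗[R] N) (hC.quot hs) (hB.quot hs) hN'
    subst hJ
    obtain ⟨r, rfl⟩ := hf s
    refine lt_of_le_of_ne (fun a ha => ?_) fun heq => ?_
    · rw [RingHom.mem_ker] at ha ⊢
      rw [RingHom.comp_apply, ha, map_zero]
    · have hr : r ∈ RingHom.ker f := by
        rw [heq, RingHom.mem_ker, RingHom.comp_apply]
        exact Ideal.Quotient.eq_zero_iff_mem.2 (Ideal.mem_span_singleton_self _)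
      rw [RingHom.mem_ker] at hr
      rw [hr] at hs
      exact one_ne_zero (hs (a₁ := (1 : R)) (a₂ := 0) (by simp))
  obtain ⟨M', _, _, π, hπ, hreg⟩ := exists_torsionfree_quotient (R := R) C M
  have : Module.Flat R M' := step M' (hM.equiv (LinearEquiv.ofBijective _ hπ))
    fun s hs => hreg s (hM.regular hs)
  exact Module.Flat.of_linearEquiv
    (LinearEquiv.ofBijective π (bijective_of_lTensor hC.faithful π hπ))

/-- The Bass condition on `C ⊗ M` forces `M` to be flat. -/
theorem flat_of_bassCond {R : Type u} [CommRing R] [IsNoetherianRing R] {C M : Type u}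
    [AddCommGroup C] [Module R C] [AddCommGroup M] [Module R M] (hC : SD R C)
    (hB : BassCond R C) (hM : BassCond R (C ⊗[R] M)) : Module.Flat R M :=
  flat_of_bassCond_aux R _ R (RingHom.id R) Function.surjective_id rfl C M hC hB hM

end

end PDual

/-- A semidualizing module `C` over a Noetherian ring `R` is pointwise dualizing
iff: a module `M` is flat iff `μ^i(p, C ⊗_R M) = 0` for all primes `p` and all `i ≠ ht(p)`. -/
theorem pointwiseDualizing_iff_flat_bass_tensor (R : Type u) [CommRing R] [IsNoetherianRing R]
    (C : Type u) [AddCommGroup C] [Module R C] (hC : IsSemidualizing R C) :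
    IsPointwiseDualizing R C ↔
      ∀ (M : Type u) (_ : AddCommGroup M) (_ : Module R M),
        (Module.Flat R M ↔ ∀ (p : Ideal R) [p.IsPrime], ∀ i : ℕ,
          (i : ℕ∞) ≠ primeHeight R p → bassNumber R p i (TensorProduct R C M) = 0) := by
  have hSD := (PDual.sd_iff C).1 hC
  constructor
  · intro h M _ _
    have hB := PDual.bassCond_of_pointwise h
    rw [← PDual.bassCond_iff]
    exact ⟨fun _ => (hB.flat_tensor M).equiv (TensorProduct.comm R M C),
      fun hM => PDual.flat_of_bassCond hSD hB hM⟩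
  · intro h
    refine PDual.pointwise_of_bassCond hSD ?_
    exact (PDual.bassCond_iff.2 ((h R _ _).1 inferInstance)).equiv (TensorProduct.rid R C)
end

section
/- Let R be a commutative Noetherian ring and let C be a pointwise dualizing semidualizing R-module. If M is a C-injective R-module and φ: F → M is a flat cover of M, then F is C-injective. -/
/-!
Why the flat cover `F` of a `C`-injective module `M = Hom(C, I)` is `C`-injective. Let `S` be the
set of nonzerodivisors of `R`. Three facts combine.

* *`F` is `S`-divisible* (`divisible_of_flatCover`). Elements of `S` are `C`-regular, so
  `C ⊗ F → C ⊗ S⁻¹F` is injective, and hence `F → Hom(C, I)`, viewed as a map `C ⊗ F → I`, extends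
  to the flat module `S⁻¹F`. Lifting the extension through the cover gives `S⁻¹F → F` whose
  composite with `F → S⁻¹F` is an automorphism, so `F` is a quotient of `S⁻¹F`.

* *Every homomorphism `g : I → C` from an ideal extends to `R` after multiplication by some
  `s ∈ S`* (`exists_smul_eq_of_pointwiseDualizing`), i.e. `C` becomes injective over the total
  quotient ring. By prime avoidance it is enough to kill the class of `g` in `Ext¹(R/I, C)` by an
  element outside `q`, for each associated prime `q` of `R`. Choose a maximal ideal `m ⊇ q`. Since
  `C_m` has finite injective dimension, elements outside `m` kill the classes in `Ext^d(N, C)` for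
  large `d` and all finitely generated `N` (`ext_torsion_of_localization`). A Bass-type descent
  (`extTorsion_descent`) lowers `d` to `1` for torsion with respect to `R \ q`: by dévissage one may
  take `N = R/p`; for `p ⊊ q` Nakayama's lemma applies, for `p ⊄ q` the claim is trivial, and for
  `p = q` one uses that `R/q` embeds in `R`, because `q` is associated to `R`.

* *Tensor evaluation* `Hom(P, D) ⊗ F ≅ Hom(P, D ⊗ F)` for `P` finitely generated and `F` flat
  (`rTensorHomToHomRTensor_bijective`). With `P = D = C` it gives `F ≅ Hom(C, C ⊗ F)`
  (`unit_bijective`). With `P` an ideal and `D = C` it writes a map from an ideal to `C ⊗ F` as a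
  sum of maps `x ↦ g x ⊗ t`; writing `t = s • y` and extending `s • g`, one gets Baer's criterion
  for `C ⊗ F` (`injective_tensor`).

Thus `F ≅ Hom(C, C ⊗ F)` with `C ⊗ F` injective.
-/

open CategoryTheory

universe u

/-! ### Tensor evaluation and divisibility of the flat cover -/

section TensorHom

open TensorProduct

/-- Tensor evaluation `Hom(P, D) ⊗ G → Hom(P, D ⊗ G)` is bijective for `P` finitely generated over a
Noetherian ring and `G` flat. Both sides are left exact in `P`, so a finite presentation of `P`
reduces the claim to finite free modules. -/
theorem rTensorHomToHomRTensor_bijective {R : Type u} [CommRing R] [IsNoetherianRing R]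
    (P D G : Type u) [AddCommGroup P] [Module R P] [Module.Finite R P]
    [AddCommGroup D] [Module R D] [AddCommGroup G] [Module R G] [Module.Flat R G] :
    Function.Bijective (TensorProduct.rTensorHomToHomRTensor (.id R) P D G) := by
  obtain ⟨n, π, hπ⟩ := Module.Finite.exists_fin' R P
  obtain ⟨m, κ, hκ⟩ := Module.Finite.exists_fin' R (LinearMap.ker π)
  have hex : Function.Exact ((LinearMap.ker π).subtype ∘ₗ κ) π := by
    rw [LinearMap.exact_iff, LinearMap.range_comp, LinearMap.range_eq_top.mpr hκ]
    simp
  set k := (LinearMap.ker π).subtype ∘ₗ κ with hk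
  -- the sequence `0 → Hom(P, D) → Hom(Rⁿ, D) → Hom(Rᵐ, D)` and its tensor product with `G`
  have hinj : Function.Injective (π.lcomp R D) := fun f g h => by
    ext x
    obtain ⟨y, rfl⟩ := hπ x
    exact LinearMap.congr_fun h y
  have hexD : Function.Exact (π.lcomp R D) (k.lcomp R D) := by
    exact LinearMap.exact_lcomp_of_exact_of_surjective D hex hπ
  have hinj' := Module.Flat.rTensor_preserves_injective_linearMap (M := G) (π.lcomp R D) hinj
  have hexG := Module.Flat.rTensor_exact G hexD
  have nat1 : ∀ a, rTensorHomToHomRTensor (.id R) (Fin n → R) D G ((π.lcomp R D).rTensor G a) =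
      rTensorHomToHomRTensor (.id R) P D G a ∘ₗ π := fun a => by
    induction a with
    | zero => ext; simp
    | add a b ha hb => rw [map_add, map_add, map_add, ha, hb]; rfl
    | tmul f g => ext; simp
  have nat2 : ∀ a, rTensorHomToHomRTensor (.id R) (Fin m → R) D G ((k.lcomp R D).rTensor G a) =
      rTensorHomToHomRTensor (.id R) (Fin n → R) D G a ∘ₗ k := fun a => by
    induction a with
    | zero => ext; simp
    | add a b ha hb => rw [map_add, map_add, map_add, ha, hb]; rfl
    | tmul f g => ext; simp
  have bij : ∀ l : ℕ, Function.Bijective (rTensorHomToHomRTensor (.id R) (Fin l → R) D G) := by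
    intro l
    rw [← rTensorHomEquivHomRTensor_toLinearMap]
    exact (rTensorHomEquivHomRTensor R (Fin l → R) D G).bijective
  constructor
  · intro a b hab
    apply hinj'
    apply (bij n).1
    rw [nat1, nat1, hab]
  · intro f
    obtain ⟨a, ha⟩ := (bij n).2 (f ∘ₗ π)
    have h0 : (k.lcomp R D).rTensor G a = 0 := by
      apply (bij m).1
      rw [nat2, ha, map_zero, LinearMap.comp_assoc, hex.linearMap_comp_eq_zero, LinearMap.comp_zero]
    obtain ⟨b, rfl⟩ := (hexG a).mp h0
    refine ⟨b, ?_⟩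
    rw [nat1] at ha
    ext x
    obtain ⟨y, rfl⟩ := hπ x
    exact LinearMap.congr_fun ha y

/-- A flat module `F` is recovered as `Hom(C, C ⊗ F)` when the homothety map of `C` is bijective:
the map `F → Hom(C, C ⊗ F)` is tensor evaluation composed with `F ≅ R ⊗ F ≅ Hom(C, C) ⊗ F`. -/
theorem unit_bijective {R : Type u} [CommRing R] [IsNoetherianRing R]
    (C F : Type u) [AddCommGroup C] [Module R C] [Module.Finite R C]
    (hC : Function.Bijective (fun r : R => r • (LinearMap.id : C →ₗ[R] C)))
    [AddCommGroup F] [Module R F] [Module.Flat R F] :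
    Function.Bijective (TensorProduct.mk R C F).flip := by
  let e : R ≃ₗ[R] (C →ₗ[R] C) :=
    LinearEquiv.ofBijective (LinearMap.toSpanSingleton R (C →ₗ[R] C) LinearMap.id) hC
  have h1 : (TensorProduct.mk R C F).flip =
      rTensorHomToHomRTensor (.id R) C C F ∘ₗ (e.toLinearMap.rTensor F) ∘ₗ
        (TensorProduct.lid R F).symm.toLinearMap := by
    ext x c
    have he : e 1 = LinearMap.id := one_smul R (LinearMap.id : C →ₗ[R] C)
    simp [he]
  rw [h1]
  exact (rTensorHomToHomRTensor_bijective C C F).comp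
    ((LinearEquiv.rTensor F e).bijective.comp (TensorProduct.lid R F).symm.bijective)

/-- Baer's criterion for `C ⊗ F`, where `F` is divisible by nonzerodivisors and homomorphisms from
ideals to `C` extend to `R` up to a nonzerodivisor. -/
theorem injective_tensor {R : Type u} [CommRing R] [IsNoetherianRing R]
    (C F : Type u) [AddCommGroup C] [Module R C]
    [AddCommGroup F] [Module R F] [Module.Flat R F]
    (hext : ∀ (I : Ideal R) (g : I →ₗ[R] C), ∃ s ∈ nonZeroDivisors R, ∃ c : C,
      ∀ x : I, s • g x = (x : R) • c)
    (hdiv : ∀ s ∈ nonZeroDivisors R, ∀ x : F, ∃ y : F, s • y = x) :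
    Module.Injective R (C ⊗[R] F) := by
  apply Module.Baer.injective
  intro I f
  suffices H : ∃ z : C ⊗[R] F, ∀ x : I, f x = (x : R) • z by
    obtain ⟨z, hz⟩ := H
    exact ⟨LinearMap.toSpanSingleton R _ z, fun x hx => by simpa using (hz ⟨x, hx⟩).symm⟩
  obtain ⟨a, rfl⟩ := (rTensorHomToHomRTensor_bijective I C F).2 f
  induction a with
  | zero => exact ⟨0, by simp⟩
  | add a b ha hb =>
    obtain ⟨z, hz⟩ := ha
    obtain ⟨w, hw⟩ := hb
    exact ⟨z + w, fun x => by rw [map_add, LinearMap.add_apply, hz, hw, smul_add]⟩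
  | tmul g t =>
    obtain ⟨s, hs, c, hc⟩ := hext I g
    obtain ⟨y, rfl⟩ := hdiv s hs t
    refine ⟨c ⊗ₜ y, fun x => ?_⟩
    rw [rTensorHomToHomRTensor_apply, ← TensorProduct.smul_tmul, hc, TensorProduct.smul_tmul']

/-- Nonzerodivisors of `R` are regular on a finitely generated `C` with bijective homothety map.
If `K` is the kernel of `s` on `C`, a map `C → K` followed by the inclusion is multiplication by
some `r` with `s * r = 0`, so `Hom(C, K) = 0`. Hence the annihilator of `C`, which is zero, contains
a `K`-regular element, and `K = 0`. -/
theorem regular_of_homothety {R : Type u} [CommRing R] [IsNoetherianRing R]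
    (C : Type u) [AddCommGroup C] [Module R C] [Module.Finite R C]
    (hC : Function.Bijective (fun r : R => r • (LinearMap.id : C →ₗ[R] C)))
    (s : R) (hs : s ∈ nonZeroDivisors R) : IsSMulRegular C s := by
  let K := LinearMap.ker (LinearMap.lsmul R C s)
  have hK : Subsingleton (C →ₗ[R] K) := by
    refine subsingleton_of_forall_eq 0 fun f => ?_
    obtain ⟨r, hr⟩ := hC.2 (K.subtype ∘ₗ f)
    have hsr : s * r = 0 := by
      apply hC.1
      ext c
      have h1 : r • c = f c := LinearMap.congr_fun hr c
      have h2 : s • (f c : C) = 0 := (f c).2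
      simp [mul_smul, h1, h2]
    have : r = 0 := by simpa using (mul_left_mem_nonZeroDivisors_eq_zero_iff hs).mp hsr
    ext c
    have h1 : r • c = f c := LinearMap.congr_fun hr c
    simp [← h1, this]
  obtain ⟨r, hr, hreg⟩ := IsSMulRegular.subsingleton_linearMap_iff.mp hK
  have hr0 : r = 0 := by
    apply hC.1
    ext c
    simpa using Module.mem_annihilator.mp hr c
  have : Subsingleton K := by
    refine subsingleton_of_forall_eq 0 fun x => hreg ?_
    simp [hr0]
  rw [isSMulRegular_iff_right_eq_zero_of_smul]
  intro c hc
  exact congrArg Subtype.val (Subsingleton.elim (⟨c, hc⟩ : K) 0)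

/-- The flat cover of a `C`-injective module is divisible by nonzerodivisors: it is a quotient of
its localization at them. -/
theorem divisible_of_flatCover {R : Type u} [CommRing R]
    (C : Type u) [AddCommGroup C] [Module R C]
    (hreg : ∀ s ∈ nonZeroDivisors R, IsSMulRegular C s)
    (M F : Type u) [AddCommGroup M] [Module R M] [AddCommGroup F] [Module R F]
    (φ : F →ₗ[R] M) (hM : IsCInjective R C M) (hφ : IsFlatCover R M F φ) :
    ∀ s ∈ nonZeroDivisors R, ∀ x : F, ∃ y : F, s • y = x := by
  obtain ⟨hF, hlift, haut⟩ := hφ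
  obtain ⟨I, _, _, hI, ⟨e⟩⟩ := hM
  let S := nonZeroDivisors R
  let G := LocalizedModule S F
  let ι : F →ₗ[R] G := LocalizedModule.mkLinearMap S F
  have hG : Module.Flat R G :=
    Module.Flat.trans R (Localization S) G
  have hGdiv : ∀ s ∈ S, ∀ x : G, ∃ y : G, s • y = x := fun s hs x =>
    ((Module.End.isUnit_iff _).mp (IsLocalizedModule.map_units ι ⟨s, hs⟩)).2 x
  have hmono : Function.Injective (ι.rTensor C) := by
    have : IsLocalizedModule S (ι.rTensor C) := IsLocalizedModule.rTensor R S ι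
    rw [IsLocalizedModule.injective_iff_isRegular S]
    intro s
    have h := Module.Flat.lTensor_preserves_injective_linearMap (M := F)
      (LinearMap.lsmul R C s) (hreg s s.2)
    intro a b hab
    apply h
    have : (LinearMap.lsmul R C (s : R)).lTensor F = LinearMap.lsmul R (F ⊗[R] C) (s : R) := by
      ext; simp
    rw [this]
    exact hab
  -- `φ` corresponds to a map `F ⊗ C → I`, which extends to `G ⊗ C`
  obtain ⟨Ψ, hΨ⟩ := hI.out (ι.rTensor C) hmono (TensorProduct.lift (e.toLinearMap ∘ₗ φ))
  let ψ : G →ₗ[R] M := e.symm.toLinearMap ∘ₗ TensorProduct.curry Ψ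
  have hψ : ψ ∘ₗ ι = φ := by
    ext x
    apply e.injective
    ext c
    simpa [ψ] using hΨ (x ⊗ₜ c)
  obtain ⟨h, hh⟩ := hlift G _ _ hG ψ
  -- lifting `ψ` through the cover makes `h ∘ ι` an automorphism, so `h : G → F` is surjective
  have hbij := haut (h ∘ₗ ι) (by rw [← LinearMap.comp_assoc, hh, hψ])
  intro s hs x
  obtain ⟨z, rfl⟩ := hbij.2 x
  obtain ⟨y, hy⟩ := hGdiv s hs (ι z)
  exact ⟨h y, by rw [← map_smul, hy]; rfl⟩

end TensorHom

/-! ### Ext and localization -/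

section ExtTorsion

open CategoryTheory.Abelian

theorem shortExact_of_linearMap {A : Type u} [CommRing A] {X Y Z : Type u}
    [AddCommGroup X] [Module A X] [AddCommGroup Y] [Module A Y] [AddCommGroup Z] [Module A Z]
    (f : X →ₗ[A] Y) (g : Y →ₗ[A] Z) (hf : Function.Injective f) (hg : Function.Surjective g)
    (hex : Function.Exact f g) :
    (ModuleCat.shortComplexOfCompEqZero f g hex.linearMap_comp_eq_zero).ShortExact where
  exact := (ShortComplex.ShortExact.moduleCat_exact_iff_function_exact _).mpr hex
  mono_f := (ModuleCat.mono_iff_injective _).mpr hf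
  epi_g := (ModuleCat.epi_iff_surjective _).mpr hg

/-- Vanishing passes from the derived functor `extM` to `Abelian.Ext`: both are computed by
`Hom(P, D)` for a projective resolution `P` of `N`. -/
theorem subsingleton_ext_of_extM {A : Type u} [CommRing A] (N D : Type u)
    [AddCommGroup N] [Module A N] [AddCommGroup D] [Module A D] (i : ℕ)
    (h : Subsingleton (extM A N D (i + 1))) :
    Subsingleton (Abelian.Ext (ModuleCat.of A N) (ModuleCat.of A D) (i + 1)) := by
  let P := projectiveResolution (ModuleCat.of A N)
  have h1 : Limits.IsZero (HomologicalComplex.homology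
      (P.complex.linearYonedaObj A (ModuleCat.of A D)) (i + 1)) :=
    (ModuleCat.isZero_of_iff_subsingleton.mpr h).of_iso (P.isoExt (i + 1) _).symm
  rw [← HomologicalComplex.exactAt_iff_isZero_homology,
    HomologicalComplex.exactAt_iff' _ i (i + 1) (i + 2) (by simp) (by simp),
    ShortComplex.ShortExact.moduleCat_exact_iff_function_exact] at h1
  refine subsingleton_of_forall_eq 0 fun e => ?_
  obtain ⟨f, hf, rfl⟩ := P.extMk_surjective e (i + 2) rfl
  rw [P.extMk_eq_zero_iff f (i + 2) rfl hf i rfl]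
  obtain ⟨g, hg⟩ := (h1 f).mp hf
  exact ⟨g, hg⟩

/-- The `S⁻¹R`-linear map `S⁻¹X → S⁻¹Y` induced by an `R`-linear map `X → Y`. -/
noncomputable abbrev localizedMap {R : Type u} [CommRing R] (S : Submonoid R) {X Y : Type u} [AddCommGroup X]
    [Module R X] [AddCommGroup Y] [Module R Y] (h : X →ₗ[R] Y) :
    LocalizedModule S X →ₗ[Localization S] LocalizedModule S Y :=
  IsLocalizedModule.mapExtendScalars S (LocalizedModule.mkLinearMap S X)
    (LocalizedModule.mkLinearMap S Y) (Localization S) h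

/-- If `Ext^{i+1}` vanishes between the localizations at `S` and `N` is finitely generated, every
class in `Ext^{i+1}(N, C)` is killed by an element of `S`. The proof is by dimension shifting
along a presentation `0 → K → P → N → 0` with `P` finite free. -/
theorem ext_torsion_of_localization {R : Type u} [CommRing R] [IsNoetherianRing R]
    (S : Submonoid R) (C : Type u) [AddCommGroup C] [Module R C] (i : ℕ) :
    ∀ (N : Type u) [AddCommGroup N] [Module R N] [Module.Finite R N],
      Subsingleton (Abelian.Ext (ModuleCat.of (Localization S) (LocalizedModule S N))
        (ModuleCat.of (Localization S) (LocalizedModule S C)) (i + 1)) →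
      ∀ e : Abelian.Ext (ModuleCat.of R N) (ModuleCat.of R C) (i + 1), ∃ s ∈ S, s • e = 0 := by
  induction i with
  | zero =>
    intro N _ _ _ hN e
    obtain ⟨P, _, _, _, _, f, hf⟩ := Module.exists_finite_presentation R N
    let K := LinearMap.ker f
    have hS := shortExact_of_linearMap K.subtype f K.subtype_injective hf
      (LinearMap.exact_subtype_ker_map f)
    have hS' := shortExact_of_linearMap (localizedMap S K.subtype) (localizedMap S f)
      (IsLocalizedModule.map_injective S _ _ _ K.subtype_injective)
      (IsLocalizedModule.map_surjective S _ _ _ hf)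
      (LocalizedModule.map_exact S _ _ (LinearMap.exact_subtype_ker_map f))
    have : Projective (ModuleCat.of R P) := ModuleCat.projective_of_free (Module.Free.chooseBasis R P)
    obtain ⟨x, rfl⟩ := Ext.contravariant_sequence_exact₃ hS (ModuleCat.of R C) e
      (Ext.eq_zero_of_projective _) (n₀ := 0) rfl
    obtain ⟨g, rfl⟩ := (Ext.mk₀_bijective (ModuleCat.of R K) (ModuleCat.of R C)).2 x
    let gₛ := localizedMap (X := K) (Y := C) S g.hom
    obtain ⟨x₂, hx₂⟩ := Ext.contravariant_sequence_exact₁ hS'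
      (ModuleCat.of (Localization S) (LocalizedModule S C))
      (Ext.mk₀ (ModuleCat.ofHom gₛ)) rfl (hN.elim _ _)
    obtain ⟨h', rfl⟩ := (Ext.mk₀_bijective _ _).2 x₂
    rw [Ext.mk₀_comp_mk₀] at hx₂
    have hx : h'.hom ∘ₗ localizedMap S K.subtype = gₛ :=
      congrArg ModuleCat.Hom.hom ((Ext.mk₀_bijective _ _).1 hx₂)
    -- the localization of `g : K → C` extends to `S⁻¹P`; clearing denominators extends a multiple
    -- of `g` to `P`
    have : Module.FinitePresentation R P := Module.finitePresentation_of_finite R P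
    obtain ⟨h, s, hs⟩ := Module.FinitePresentation.exists_lift_of_isLocalizedModule S
      (LocalizedModule.mkLinearMap S C)
      (h'.hom.restrictScalars R ∘ₗ LocalizedModule.mkLinearMap S P)
    obtain ⟨t, ht⟩ := Module.Finite.exists_smul_of_comp_eq_of_isLocalizedModule S
      (LocalizedModule.mkLinearMap S C) (h ∘ₗ K.subtype) (s • g.hom) (by
        ext k
        have h1 := LinearMap.congr_fun hs k
        have h2 := LinearMap.congr_fun hx (LocalizedModule.mkLinearMap S K k)
        have h3 : localizedMap S K.subtype (LocalizedModule.mkLinearMap S K k) =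
          LocalizedModule.mkLinearMap S P k := IsLocalizedModule.map_apply S _ _ _ _
        have h4 : gₛ (LocalizedModule.mkLinearMap S K k) =
          LocalizedModule.mkLinearMap S C (g.hom k) := IsLocalizedModule.map_apply S _ _ _ _
        rw [LinearMap.comp_apply, h3, h4] at h2
        exact h1.trans ((congrArg (s • ·) h2).trans (map_smul _ (s : R) _).symm))
    refine ⟨t * s, mul_mem t.2 s.2, ?_⟩
    have hts : ((t : R) * s) • g = ModuleCat.ofHom K.subtype ≫ ModuleCat.ofHom ((t : R) • h) := by
      ext k
      have := LinearMap.congr_fun ht k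
      simpa [mul_smul, Submonoid.smul_def] using this.symm
    rw [← Ext.comp_smul, ← Ext.mk₀_smul, hts, ← Ext.mk₀_comp_mk₀]
    exact hS.extClass_comp_assoc _
  | succ i ih =>
    intro N _ _ _ hN e
    obtain ⟨P, _, _, _, _, f, hf⟩ := Module.exists_finite_presentation R N
    let K := LinearMap.ker f
    have hS := shortExact_of_linearMap K.subtype f K.subtype_injective hf
      (LinearMap.exact_subtype_ker_map f)
    have hS' := shortExact_of_linearMap (localizedMap S K.subtype) (localizedMap S f)
      (IsLocalizedModule.map_injective S _ _ _ K.subtype_injective)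
      (IsLocalizedModule.map_surjective S _ _ _ hf)
      (LocalizedModule.map_exact S _ _ (LinearMap.exact_subtype_ker_map f))
    have : Projective (ModuleCat.of R P) := ModuleCat.projective_of_free (Module.Free.chooseBasis R P)
    have : Projective (ModuleCat.of (Localization S) (LocalizedModule S P)) :=
      (IsProjective.iff_projective _).mp inferInstance
    obtain ⟨x, rfl⟩ := Ext.contravariant_sequence_exact₃ hS (ModuleCat.of R C) e
      (Ext.eq_zero_of_projective _) (n₀ := i + 1) (add_comm _ _)
    obtain ⟨s, hs, hsx⟩ := ih K (subsingleton_of_forall_eq 0 fun y => by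
      obtain ⟨y', rfl⟩ := Ext.contravariant_sequence_exact₁ hS'
        (ModuleCat.of (Localization S) (LocalizedModule S C)) y (add_comm _ _) (hN.elim _ _)
      rw [Ext.eq_zero_of_projective y', Ext.comp_zero]) x
    exact ⟨s, hs, by rw [← Ext.comp_smul, hsx, Ext.comp_zero]⟩

end ExtTorsion

/-! ### Descent of torsion in Ext at an associated prime -/

section Descent

open CategoryTheory.Abelian

/-- Every class in `Ext^d(N, D)`, for `N` finitely generated, is killed by an element of `S`; for
finitely generated `D` over a Noetherian ring this says `S⁻¹ Ext^d(N, D) = 0` for all such `N`. -/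
def ExtTorsion {R : Type u} [CommRing R] (S : Submonoid R) (D : Type u) [AddCommGroup D]
    [Module R D] (d : ℕ) : Prop :=
  ∀ (N : Type u) [AddCommGroup N] [Module R N] [Module.Finite R N]
    (e : Abelian.Ext (ModuleCat.of R N) (ModuleCat.of R D) d), ∃ s ∈ S, s • e = 0

theorem ext_smul_eq {R : Type u} [CommRing R] {N D : Type u} [AddCommGroup N] [Module R N]
    [AddCommGroup D] [Module R D] {d : ℕ} (x : R)
    (e : Abelian.Ext (ModuleCat.of R N) (ModuleCat.of R D) d) :
    x • e = (Ext.mk₀ (ModuleCat.ofHom (LinearMap.lsmul R N x))).comp e (zero_add d) := by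
  have : ModuleCat.ofHom (LinearMap.lsmul R N x) = x • 𝟙 (ModuleCat.of R N) := rfl
  rw [this, Ext.mk₀_smul, Ext.smul_comp, Ext.mk₀_id_comp]

/-- Nakayama's lemma for `E` localized at `q`: the hypothesis says that `E_q = x E_q`. -/
theorem exists_smul_eq_zero_of_smul_eq_smul {R : Type u} [CommRing R] (q : Ideal R) [q.IsPrime]
    (E : Type u) [AddCommGroup E] [Module R E] [Module.Finite R E] (x : R) (hx : x ∈ q)
    (h : ∀ e : E, ∃ s ∈ q.primeCompl, ∃ e' : E, s • e = x • e') (e : E) :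
    ∃ s ∈ q.primeCompl, s • e = 0 := by
  suffices H : Subsingleton (LocalizedModule q.primeCompl E) from
    LocalizedModule.subsingleton_iff.mp H e
  rw [← Submodule.subsingleton_iff (Localization.AtPrime q), ← subsingleton_iff_bot_eq_top, eq_comm]
  refine Submodule.eq_bot_of_le_smul_of_le_jacobson_bot
    (IsLocalRing.maximalIdeal (Localization.AtPrime q)) ⊤ Module.Finite.fg_top ?_
    (IsLocalRing.maximalIdeal_le_jacobson ⊥)
  intro z _
  induction z using LocalizedModule.induction_on with
  | h e t =>
    obtain ⟨s, hs, e', he⟩ := h e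
    have h1 : LocalizedModule.mk e t =
        Localization.mk x ⟨s, hs⟩ • (LocalizedModule.mk e' t : LocalizedModule q.primeCompl E) := by
      rw [LocalizedModule.mk_smul_mk, ← he]
      exact (LocalizedModule.mk_cancel_common_left ⟨s, hs⟩ t e).symm
    rw [h1]
    refine Submodule.smul_mem_smul ?_ trivial
    rw [Localization.mk_eq_mk', IsLocalization.AtPrime.mk'_mem_maximal_iff _ q]
    exact hx

/-- Bass-type descent: torsion of `Ext^{d+2}(-, D)` with respect to `R \ q` forces the same for
`Ext^{d+1}(-, D)` when `q` is an associated prime of `R`. A prime filtration reduces the claim to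
modules of the form `R/p`. -/
theorem extTorsion_descent {R : Type u} [CommRing R] [IsNoetherianRing R] (q : Ideal R) [q.IsPrime]
    (hq : IsAssociatedPrime q R) (D : Type u) [AddCommGroup D] [Module R D] [Module.Finite R D]
    (d : ℕ) (h : ExtTorsion q.primeCompl D (d + 2)) : ExtTorsion q.primeCompl D (d + 1) := by
  intro N _ _ hN
  have : Projective (ModuleCat.of R R) := ModuleCat.projective_of_free (Module.Free.chooseBasis R R)
  refine IsNoetherianRing.induction_on_isQuotientEquivQuotientPrime R hN
    (motive := fun N _ _ _ => ∀ e : Abelian.Ext (ModuleCat.of R N) (ModuleCat.of R D) (d + 1),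
      ∃ s ∈ q.primeCompl, s • e = 0) ?_ ?_ ?_
  · intro N _ _ _ _ e
    have : Projective (ModuleCat.of R N) :=
      ModuleCat.projective_of_free (Module.Free.chooseBasis R N)
    exact ⟨1, one_mem _, Ext.eq_zero_of_projective _⟩
  · intro N _ _ _ p a e
    by_cases hpq : p.asIdeal ≤ q
    swap
    -- an element of `p` outside `q` acts as zero on `N`, hence on Ext
    · obtain ⟨x, hxp, hxq⟩ := SetLike.not_le_iff_exists.mp hpq
      refine ⟨x, hxq, ?_⟩
      have : LinearMap.lsmul R N x = 0 := by
        ext y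
        apply a.injective
        obtain ⟨r, hr⟩ := Ideal.Quotient.mk_surjective (a y)
        rw [LinearMap.lsmul_apply, map_smul, ← hr, LinearMap.zero_apply, map_zero]
        change Ideal.Quotient.mk _ (x * r) = 0
        exact Ideal.Quotient.eq_zero_iff_mem.mpr (Ideal.mul_mem_right _ _ hxp)
      rw [ext_smul_eq, this, ModuleCat.ofHom_zero, Ext.mk₀_zero, Ext.zero_comp]
    rcases hpq.eq_or_lt with rfl | hlt
    -- `R/q` embeds in `R`, and the positive Ext groups of `R` vanish
    · obtain ⟨f, hf⟩ := (isAssociatedPrime_iff_exists_injective_linearMap ..).mp hq |>.2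
      have hg := (LinearMap.range (f ∘ₗ a.toLinearMap)).mkQ_surjective
      have hS := shortExact_of_linearMap (f ∘ₗ a.toLinearMap) (LinearMap.range (f ∘ₗ a.toLinearMap)).mkQ
        (hf.comp a.injective) hg (LinearMap.exact_map_mkQ_range _)
      obtain ⟨s, hs, hse⟩ := h _ (hS.extClass.comp e (add_comm 1 (d + 1)))
      rw [← Ext.comp_smul] at hse
      obtain ⟨x, hx⟩ := Ext.contravariant_sequence_exact₁ hS _ _ _ hse
      refine ⟨s, hs, ?_⟩
      rw [← hx, Ext.eq_zero_of_projective x, Ext.comp_zero]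
    -- `x ∈ q \ p` is injective on `N`, so Ext is divisible by `x` up to elements outside `q`
    · obtain ⟨x, hxq, hxp⟩ := SetLike.exists_of_lt hlt
      have hinj : Function.Injective (LinearMap.lsmul R N x) := by
        rw [← LinearMap.ker_eq_bot, LinearMap.ker_eq_bot']
        intro y hy
        obtain ⟨r, hr⟩ := Ideal.Quotient.mk_surjective (a y)
        apply a.injective
        have h1 := congrArg a hy
        rw [LinearMap.lsmul_apply, map_smul, map_zero, ← hr] at h1
        have h2 : x * r ∈ p.asIdeal := Ideal.Quotient.eq_zero_iff_mem.mp h1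
        rw [← hr, map_zero, Ideal.Quotient.eq_zero_iff_mem]
        exact (p.isPrime.mem_or_mem h2).resolve_left hxp
      have hS := shortExact_of_linearMap (LinearMap.lsmul R N x)
        (LinearMap.range (LinearMap.lsmul R N x)).mkQ
        hinj (Submodule.mkQ_surjective _) (LinearMap.exact_map_mkQ_range _)
      have hfin : Module.Finite R
          (Abelian.Ext (ModuleCat.of R N) (ModuleCat.of R D) (d + 1)) :=
        ModuleCat.finite_ext R _ _ _
      refine exists_smul_eq_zero_of_smul_eq_smul q _ x hxq (fun e => ?_) e
      obtain ⟨s, hs, hse⟩ := h _ (hS.extClass.comp e (add_comm 1 (d + 1)))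
      rw [← Ext.comp_smul] at hse
      obtain ⟨e', he'⟩ := Ext.contravariant_sequence_exact₁ hS _ _ _ hse
      exact ⟨s, hs, e', by rw [← he', ext_smul_eq]⟩
  · intro N₁ _ _ _ N₂ _ _ _ N₃ _ _ _ f g hf hg hex h₁ h₃ e
    have hS := shortExact_of_linearMap f g hf hg hex
    obtain ⟨s, hs, hse⟩ := h₁ ((Ext.mk₀ (ModuleCat.ofHom f)).comp e (zero_add _))
    rw [← Ext.comp_smul] at hse
    obtain ⟨x, hx⟩ := Ext.contravariant_sequence_exact₂ hS _ _ hse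
    obtain ⟨t, ht, htx⟩ := h₃ x
    refine ⟨t * s, mul_mem ht hs, ?_⟩
    rw [mul_smul, ← hx, ← Ext.comp_smul]
    exact (congrArg (fun y => Ext.comp _ y _) htx).trans (Ext.comp_zero ..)

end Descent

/-! ### Extension of maps from ideals to a pointwise dualizing module -/

section Conclusion

open CategoryTheory.Abelian

/-- Localized at an associated prime of `R`, the groups `Ext¹(N, C)` with `N` finitely generated
vanish: start the descent above the injective dimension of `C` at a maximal ideal containing `q`. -/
theorem extTorsion_one {R : Type u} [CommRing R] [IsNoetherianRing R]
    (C : Type u) [AddCommGroup C] [Module R C] (hC : IsPointwiseDualizing R C)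
    (q : Ideal R) (hq : IsAssociatedPrime q R) (_ : q.IsPrime) : ExtTorsion q.primeCompl C 1 := by
  have hfin : Module.Finite R C := hC.1.1
  obtain ⟨m, hm, hqm⟩ := q.exists_le_maximal (Ideal.IsPrime.ne_top ‹_›)
  have := hm.isPrime
  have hdim := (hC.2 m hm).2
  obtain ⟨n, hn, hlt⟩ := sInf_lt_iff.mp hdim
  lift n to ℕ using hlt.ne
  have key : ∀ k, ExtTorsion q.primeCompl C (k + 1) → ExtTorsion q.primeCompl C 1 := by
    intro k
    induction k with
    | zero => exact id
    | succ k ih => exact fun h => ih (extTorsion_descent q hq C k h)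
  refine key n fun N _ _ _ e => ?_
  obtain ⟨s, hs, hse⟩ := ext_torsion_of_localization m.primeCompl C n N
    (subsingleton_ext_of_extM _ _ _ (hn _ _ _ _ (by exact_mod_cast n.lt_succ_self))) e
  exact ⟨s, fun h => hs (hqm h), hse⟩

/-- A homomorphism from an ideal to `C` extends to `R` after multiplication by a nonzerodivisor. The
multipliers for which it extends form an ideal `J` which lies in no associated prime of `R`. -/
theorem exists_smul_eq_of_pointwiseDualizing {R : Type u} [CommRing R] [IsNoetherianRing R]
    (C : Type u) [AddCommGroup C] [Module R C] (hC : IsPointwiseDualizing R C)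
    (I : Ideal R) (g : I →ₗ[R] C) :
    ∃ s ∈ nonZeroDivisors R, ∃ c : C, ∀ x : I, s • g x = (x : R) • c := by
  let J : Ideal R :=
    { carrier := {s | ∃ c : C, ∀ x : I, s • g x = (x : R) • c}
      zero_mem' := ⟨0, fun x => by simp⟩
      add_mem' := by
        rintro s t ⟨c, hc⟩ ⟨d, hd⟩
        exact ⟨c + d, fun x => by rw [add_smul, hc, hd, smul_add]⟩
      smul_mem' := by
        rintro r s ⟨c, hc⟩
        exact ⟨r • c, fun x => by rw [smul_eq_mul, mul_smul, hc, smul_comm]⟩ }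
  suffices H : ∀ q ∈ associatedPrimes R R, ¬ J ≤ q by
    by_contra! hcon
    have hsub : (J : Set R) ⊆ ⋃ q ∈ associatedPrimes R R, (q : Set R) := by
      rw [biUnion_associatedPrimes_eq_compl_nonZeroDivisors R]
      rintro s ⟨c, hc⟩ hs
      obtain ⟨x, hx⟩ := hcon s hs c
      exact hx (hc x)
    obtain ⟨q, hq, hJq⟩ := (Ideal.subset_union_prime_finite (associatedPrimes.finite R R)
      (f := fun q => q) ⊥ ⊥ (fun q hq _ _ => hq.isPrime)).mp hsub
    exact H q hq hJq
  intro q hq hJq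
  have := hq.isPrime
  have hS := shortExact_of_linearMap I.subtype I.mkQ I.subtype_injective I.mkQ_surjective
    (LinearMap.exact_subtype_mkQ I)
  obtain ⟨s, hs, hse⟩ := extTorsion_one C hC q hq this (R ⧸ I)
    (hS.extClass.comp (Ext.mk₀ (ModuleCat.ofHom g)) (add_zero 1))
  rw [← Ext.comp_smul, ← Ext.mk₀_smul] at hse
  obtain ⟨x, hx⟩ := Ext.contravariant_sequence_exact₁ hS _ _ _ hse
  obtain ⟨h, rfl⟩ := (Ext.mk₀_bijective (ModuleCat.of R R) (ModuleCat.of R C)).2 x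
  rw [Ext.mk₀_comp_mk₀] at hx
  have hx' := congrArg ModuleCat.Hom.hom ((Ext.mk₀_bijective _ _).1 hx)
  refine hs (hJq ⟨h.hom (1 : R), fun x => ?_⟩)
  have h1 : (x : R) • h.hom (1 : R) = h.hom (x : R) := by
    rw [← map_smul]
    exact congrArg h.hom (mul_one (x : R))
  exact (LinearMap.congr_fun hx' x).symm.trans h1.symm

end Conclusion

/-! ### The flat cover -/

/-- If `C` is pointwise dualizing over a Noetherian ring `R`, `M` is a
`C`-injective module, and `φ : F → M` is a flat cover, then `F` is `C`-injective. -/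
theorem cinjective_flat_cover (R : Type u) [CommRing R] [IsNoetherianRing R]
    (C : Type u) [AddCommGroup C] [Module R C] (hC : IsPointwiseDualizing R C)
    (M F : Type u) [AddCommGroup M] [Module R M] [AddCommGroup F] [Module R F]
    (φ : F →ₗ[R] M) (hM : IsCInjective R C M) (hφ : IsFlatCover R M F φ) :
    IsCInjective R C F := by
  have hfin : Module.Finite R C := hC.1.1
  have hhom := hC.1.2.1
  have hflat : Module.Flat R F := hφ.1
  have hdiv := divisible_of_flatCover C (regular_of_homothety C hhom) M F φ hM hφ
  exact ⟨TensorProduct R C F, inferInstance, inferInstance,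
    injective_tensor C F (exists_smul_eq_of_pointwiseDualizing C hC) hdiv,
    ⟨LinearEquiv.ofBijective _ (unit_bijective C F hhom)⟩⟩
end
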